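/- Let N ≥ 2, 1 < p ≤ N and p − 1 < q < q_c, and let Ω ⊆ ℝ^N be a bounded open set containing 0. Let u₁ and u₂ be strong solutions of (E) on Ω ∖ {0}, nonnegative there, continuous on \overline{Ω} ∖ {0}, and equal on ∂Ω. Assume that either (a) there exists k ≥ 0 such that lim_{x→0} u_i(x)/μ_p(x) = k for i = 1, 2, or (b) lim_{x→0} |x|^{β_q} u_i(x) = λ_{N,p,q} for i = 1, 2. Then u₁ = u₂ on Ω ∖ {0}. -/

import Mathlib

open Metric Set Filter Topology MeasureTheory

/-- The vector field `x ↦ |∇u(x)|^{p-2} ∇u(x)`. -/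
noncomputable def pGradField {N : ℕ} (p : ℝ) (u : EuclideanSpace ℝ (Fin N) → ℝ)
    (x : EuclideanSpace ℝ (Fin N)) : EuclideanSpace ℝ (Fin N) :=
  ‖gradient u x‖ ^ (p - 2) • gradient u x

/-- A strong solution of `(E) : -Δ_p u + |∇u|^q = 0` on an open set `G ⊆ ℝ^N`. -/
def IsStrongSolution {N : ℕ} (p q : ℝ) (G : Set (EuclideanSpace ℝ (Fin N)))
    (u : EuclideanSpace ℝ (Fin N) → ℝ) : Prop :=
  ContDiffOn ℝ 1 u G ∧
  ContDiffOn ℝ 3 u {x | x ∈ G ∧ gradient u x ≠ 0} ∧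
  ∀ x ∈ G, DifferentiableAt ℝ (pGradField p u) x ∧
    LinearMap.trace ℝ (EuclideanSpace ℝ (Fin N))
      (fderiv ℝ (pGradField p u) x : EuclideanSpace ℝ (Fin N) →ₗ[ℝ] EuclideanSpace ℝ (Fin N))
      = ‖gradient u x‖ ^ q

/-- The fundamental solution of the p-Laplacian in `ℝ^N`. -/
noncomputable def mup (N : ℕ) (p : ℝ) (x : EuclideanSpace ℝ (Fin N)) : ℝ :=
  if p < N then ((p - 1) / ((N : ℝ) - p)) * ‖x‖ ^ ((p - (N : ℝ)) / (p - 1))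
  else -Real.log ‖x‖

section General

variable {E : Type*} [NormedAddCommGroup E] [InnerProductSpace ℝ E]

/-- The normalised `p`-Laplacian of a Hessian `L` in the unit direction `ν`. -/
noncomputable def ellip (p : ℝ) (L : E →L[ℝ] E) (ν : E) : ℝ :=
  LinearMap.trace ℝ E (L : E →ₗ[ℝ] E) + (p - 2) * inner ℝ (L ν) ν

lemma ellip_add (p : ℝ) (L M : E →L[ℝ] E) (ν : E) :
    ellip p (L + M) ν = ellip p L ν + ellip p M ν := by
  simp only [ellip, ContinuousLinearMap.toLinearMap_add, map_add, add_apply,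
    inner_add_left]
  ring

lemma ellip_sub (p : ℝ) (L M : E →L[ℝ] E) (ν : E) :
    ellip p (L - M) ν = ellip p L ν - ellip p M ν := by
  simp only [ellip, ContinuousLinearMap.toLinearMap_sub, map_sub, sub_apply,
    inner_sub_left]
  ring

lemma ellip_smul (p c : ℝ) (L : E →L[ℝ] E) (ν : E) :
    ellip p (c • L) ν = c * ellip p L ν := by
  simp only [ellip, ContinuousLinearMap.toLinearMap_smul, map_smul, smul_apply,
    inner_smul_left, smul_eq_mul]
  simp
  ring

variable [FiniteDimensional ℝ E]

/-- A unit vector belongs to some orthonormal basis. -/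
lemma exists_orthonormalBasis_mem {ν : E} (hν : ‖ν‖ = 1) :
    ∃ (u : Finset E) (b : OrthonormalBasis u ℝ E) (i : u), b i = ν := by
  have h : Orthonormal ℝ (Subtype.val : ({ν} : Set E) → E) := by
    constructor
    · rintro ⟨i, hi⟩
      simpa [mem_singleton_iff.1 hi] using hν
    · rintro ⟨i, hi⟩ ⟨j, hj⟩ hij
      exact absurd (Subtype.ext ((mem_singleton_iff.1 hi).trans (mem_singleton_iff.1 hj).symm)) hij
  obtain ⟨u, b, hu, hb⟩ := h.exists_orthonormalBasis_extension
  exact ⟨u, b, ⟨ν, hu rfl⟩, by rw [hb]⟩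

lemma ellip_nonpos {p : ℝ} (hp : 1 ≤ p) {L : E →L[ℝ] E} (hL : ∀ τ, inner ℝ (L τ) τ ≤ 0)
    {ν : E} (hν : ‖ν‖ = 1) : ellip p L ν ≤ 0 := by
  classical
  obtain ⟨u, b, i, hi⟩ := exists_orthonormalBasis_mem hν
  have h1 : LinearMap.trace ℝ E (L : E →ₗ[ℝ] E) ≤ inner ℝ (L ν) ν := by
    rw [LinearMap.trace_eq_sum_inner _ b, ← Finset.add_sum_erase _ _ (Finset.mem_univ i), hi]
    have : ∑ j ∈ Finset.univ.erase i, inner ℝ (b j) ((L : E →ₗ[ℝ] E) (b j)) ≤ 0 :=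
      Finset.sum_nonpos fun j _ => by
        rw [real_inner_comm]; exact hL _
    rw [real_inner_comm]
    simpa using this
  have h2 := hL ν
  unfold ellip
  nlinarith

lemma inner_fderiv_nonpos_of_isLocalMax {f : E → ℝ} {X : E → E} {L : E →L[ℝ] E} {x : E}
    (hX : ∀ᶠ y in 𝓝 x, HasGradientAt f (X y) y) (hL : HasFDerivAt X L x) (hmax : IsLocalMax f x)
    (τ : E) : inner ℝ (L τ) τ ≤ 0 := by
  have hline : ∀ t : ℝ, HasDerivAt (fun t : ℝ => x + t • τ) τ t := fun t => by
    simpa using ((hasDerivAt_id t).smul_const τ).const_add x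
  have hcont : Tendsto (fun t : ℝ => x + t • τ) (𝓝 0) (𝓝 x) := by
    have := (hline 0).continuousAt.tendsto
    simpa using this
  set g : ℝ → ℝ := fun t => f (x + t • τ) with hg
  have hg' : ∀ᶠ t in 𝓝 (0 : ℝ), HasDerivAt g (inner ℝ (X (x + t • τ)) τ) t := by
    filter_upwards [hcont.eventually hX] with t ht
    have := (hasGradientAt_iff_hasFDerivAt.1 ht).comp_hasDerivAt t (hline t)
    simpa [hg, Function.comp_def] using this
  have hderiv : deriv g =ᶠ[𝓝 0] fun t => inner ℝ (X (x + t • τ)) τ :=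
    hg'.mono fun t ht => ht.deriv
  have h2 : HasDerivAt (fun t : ℝ => inner ℝ (X (x + t • τ)) τ) (inner ℝ (L τ) τ) 0 := by
    have hL' : HasFDerivAt X L (x + (0 : ℝ) • τ) := by simpa using hL
    have h3 : HasDerivAt (fun t : ℝ => X (x + t • τ)) (L τ) 0 :=
      hL'.comp_hasDerivAt (0 : ℝ) (hline 0)
    simpa using h3.inner ℝ (hasDerivAt_const (0 : ℝ) τ)
  have hdd : deriv (deriv g) 0 = inner ℝ (L τ) τ := by
    rw [hderiv.deriv_eq, h2.deriv]
  have hgmax : IsLocalMax g 0 := by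
    have : ∀ᶠ t in 𝓝 (0 : ℝ), f (x + t • τ) ≤ f x := hcont.eventually hmax
    simpa [IsLocalMax, IsMaxFilter, hg] using this
  by_contra! hpos
  have hmin : IsLocalMin g 0 :=
    isLocalMin_of_deriv_deriv_pos (by rw [hdd]; exact hpos) hgmax.deriv_eq_zero
      hg'.self_of_nhds.continuousAt
  have hconst : g =ᶠ[𝓝 0] fun _ => g 0 := by
    filter_upwards [hgmax, hmin] with t h1 h2 using le_antisymm h1 h2
  have : deriv (deriv g) 0 = 0 := by
    rw [hconst.deriv.deriv_eq]; simp
  linarith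

/-- If the shifted difference `U (a + ·) - V (b + ·)` has a local maximum at `0`, then the
gradients agree and the Hessians are ordered. -/
lemma contact_of_isLocalMax {U V : E → ℝ} {X Y : E → E} {L M : E →L[ℝ] E} {a b : E}
    (hX : ∀ᶠ y in 𝓝 a, HasGradientAt U (X y) y) (hY : ∀ᶠ y in 𝓝 b, HasGradientAt V (Y y) y)
    (hL : HasFDerivAt X L a) (hM : HasFDerivAt Y M b)
    (hmax : IsLocalMax (fun ζ => U (a + ζ) - V (b + ζ)) 0) (τ : E) :
    inner ℝ ((L - M) τ) τ ≤ 0 := by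
  have ta : Tendsto (fun ζ : E => a + ζ) (𝓝 0) (𝓝 a) := by
    simpa using (by fun_prop : Continuous fun ζ : E => a + ζ).tendsto 0
  have tb : Tendsto (fun ζ : E => b + ζ) (𝓝 0) (𝓝 b) := by
    simpa using (by fun_prop : Continuous fun ζ : E => b + ζ).tendsto 0
  refine inner_fderiv_nonpos_of_isLocalMax (f := fun ζ => U (a + ζ) - V (b + ζ))
    (X := fun ζ => X (a + ζ) - Y (b + ζ)) (x := 0) ?_ ?_ hmax τ
  · filter_upwards [ta.eventually hX, tb.eventually hY] with ζ h1 h2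
    rw [hasGradientAt_iff_hasFDerivAt] at *
    have h1' := (hasFDerivAt_comp_add_left a).2 h1
    have h2' := (hasFDerivAt_comp_add_left b).2 h2
    rw [map_sub]
    exact h1'.sub h2'
  · have h1 : HasFDerivAt (fun ζ => X (a + ζ)) L 0 := by
      rw [hasFDerivAt_comp_add_left]; simpa using hL
    have h2 : HasFDerivAt (fun ζ => Y (b + ζ)) M 0 := by
      rw [hasFDerivAt_comp_add_left]; simpa using hM
    exact h1.sub h2

lemma gradient_eq_of_isLocalMax {U V : E → ℝ} {X Y a b : E}
    (hX : HasGradientAt U X a) (hY : HasGradientAt V Y b)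
    (hmax : IsLocalMax (fun ζ => U (a + ζ) - V (b + ζ)) 0) : X = Y := by
  rw [hasGradientAt_iff_hasFDerivAt] at *
  have h1 : HasFDerivAt (fun ζ => U (a + ζ)) (InnerProductSpace.toDual ℝ E X) 0 := by
    rw [hasFDerivAt_comp_add_left]; simpa using hX
  have h2 : HasFDerivAt (fun ζ => V (b + ζ)) (InnerProductSpace.toDual ℝ E Y) 0 := by
    rw [hasFDerivAt_comp_add_left]; simpa using hY
  have := hmax.hasFDerivAt_eq_zero (h1.sub h2)
  exact (InnerProductSpace.toDual ℝ E).injective (sub_eq_zero.1 this)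

end General

section Doubling

variable {E : Type*} [NormedAddCommGroup E] [NormedSpace ℝ E] [FiniteDimensional ℝ E]

/-- Let `K` be the compact set of maximum points of `U - V` in an open set `D`. If at all
contact points of `U` with a proper translate of `V` the derivative of `U` or of `V`
vanishes, then every point of `K` is a local maximum of `U` and a local minimum of `V`. -/
theorem isLocalMax_and_isLocalMin_of_contact {D K : Set E} {U V : E → ℝ} {m : ℝ} (hD : IsOpen D)
    (hU : UpperSemicontinuousOn U D) (hV : LowerSemicontinuousOn V D)
    (hK : IsCompact K) (hKD : K ⊆ D) (hKm : ∀ x ∈ K, U x - V x = m)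
    (hlt : ∀ x ∈ D \ K, U x - V x < m)
    (hcontact : ∀ a ∈ D, ∀ b ∈ D, a ≠ b → IsLocalMax (fun ζ => U (a + ζ) - V (b + ζ)) 0 →
      HasFDerivAt U (0 : E →L[ℝ] ℝ) a ∨ HasFDerivAt V (0 : E →L[ℝ] ℝ) b) :
    ∀ x ∈ K, IsLocalMax U x ∧ IsLocalMin V x := by
  have hle : ∀ x ∈ D, U x - V x ≤ m := fun x hx => by
    by_cases h : x ∈ K
    · exact (hKm x h).le
    · exact (hlt x ⟨hx, h⟩).le
  obtain ⟨r, hr, hrD⟩ := hK.exists_cthickening_subset_open hD hKD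
  set C := cthickening (r / 2) K with hC
  have hCc : IsCompact C := hK.cthickening
  set S := C \ thickening (r / 2) K with hS
  have hSc : IsCompact S := hCc.diff isOpen_thickening
  have hadd : ∀ x ∈ C, ∀ z : E, ‖z‖ ≤ r / 2 → x + z ∈ D := by
    intro x hx z hz
    apply hrD
    have : x + z ∈ cthickening (r / 2) (cthickening (r / 2) K) := by
      apply mem_cthickening_of_dist_le _ x _ _ hx
      simpa [dist_eq_norm] using hz
    have h2 := cthickening_cthickening_subset (by positivity : 0 ≤ r / 2)
      (by positivity : 0 ≤ r / 2) K this
    simpa using h2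
  have hCD : C ⊆ D := fun x hx => by simpa using hadd x hx 0 (by simpa using by positivity)
  have hKC : K ⊆ thickening (r / 2) K := self_subset_thickening (by positivity) K
  have hSlt : ∀ᶠ z in 𝓝 (0 : E), ∀ x ∈ S, U (x + z) - V x < m := by
    refine hSc.eventually_forall_of_forall_eventually fun x hx => ?_
    have hxD : x ∈ D := hCD hx.1
    have hx' : U x - V x < m := hlt x ⟨hxD, fun h => hx.2 (hKC h)⟩
    obtain ⟨d, hd, hd'⟩ : ∃ d, 0 < d ∧ U x - V x + 2 * d < m :=
      ⟨(m - (U x - V x)) / 4, by linarith, by linarith⟩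
    have hUx : ∀ᶠ y in 𝓝 x, U y < U x + d := by
      have := hU x hxD (U x + d) (by linarith)
      rwa [hD.nhdsWithin_eq hxD] at this
    have hVx : ∀ᶠ y in 𝓝 x, V x - d < V y := by
      have := hV x hxD (V x - d) (by linarith)
      rwa [hD.nhdsWithin_eq hxD] at this
    have t1 : Tendsto (fun q : E × E => q.2 + q.1) (𝓝 (0, x)) (𝓝 x) := by
      simpa using (by fun_prop :
        Continuous fun q : E × E => q.2 + q.1).tendsto (0, x)
    have t2 : Tendsto (fun q : E × E => q.2) (𝓝 (0, x)) (𝓝 x) :=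
      continuous_snd.tendsto (0, x)
    filter_upwards [t1.eventually hUx, t2.eventually hVx] with q h1 h2
    linarith
  obtain ⟨δ, hδ, hδS⟩ := Metric.eventually_nhds_iff_ball.1 hSlt
  have key : ∀ z : E, ‖z‖ < δ → ‖z‖ ≤ r / 2 → ∀ x ∈ C, U (x + z) - V x ≤ m := by
    intro z hz1 hz2 x₁ hx₁
    by_contra! hgt
    obtain ⟨e, he, he'⟩ : ∃ e, 0 < e ∧ m < U (x₁ + z) - V x₁ - e :=
      ⟨(U (x₁ + z) - V x₁ - m) / 2, by linarith, by linarith⟩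
    have hnorm : ∀ t ∈ Icc (0 : ℝ) 1, ‖t • z‖ ≤ ‖z‖ := fun t ht => by
      rw [norm_smul, Real.norm_of_nonneg ht.1]
      exact mul_le_of_le_one_left (norm_nonneg _) ht.2
    set F : E × ℝ → ℝ := fun q => U (q.1 + q.2 • z) + -V q.1 + -(e * q.2) with hF
    have hFusc : UpperSemicontinuousOn F (C ×ˢ Icc (0 : ℝ) 1) := by
      refine UpperSemicontinuousOn.add (UpperSemicontinuousOn.add ?_ ?_) ?_
      · refine hU.comp (g := fun q : E × ℝ => q.1 + q.2 • z) (by fun_prop) ?_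
        rintro ⟨x, t⟩ ⟨hx, ht⟩
        exact hadd x hx _ ((hnorm t ht).trans hz2)
      · have := LowerSemicontinuousOn.neg (hV.mono hCD)
        exact this.comp (g := fun q : E × ℝ => q.1) (by fun_prop) fun q hq => hq.1
      · exact ContinuousOn.upperSemicontinuousOn (by fun_prop)
    have hne : (C ×ˢ Icc (0 : ℝ) 1).Nonempty := ⟨(x₁, 1), hx₁, by simp⟩
    obtain ⟨⟨x, t⟩, ⟨hxC, ht⟩, hmaxF⟩ := hFusc.exists_isMaxOn hne (hCc.prod isCompact_Icc)
    simp only at hxC ht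
    have hmax : ∀ y ∈ C, ∀ τ ∈ Icc (0 : ℝ) 1,
        U (y + τ • z) - V y - e * τ ≤ U (x + t • z) - V x - e * t := fun y hy τ hτ => by
      have := hmaxF (show (y, τ) ∈ C ×ˢ Icc (0 : ℝ) 1 from ⟨hy, hτ⟩)
      simp only [hF, mem_ofPred_eq] at this
      linarith
    have hgt' : m < U (x + t • z) - V x - e * t := by
      have := hmax x₁ hx₁ 1 (by simp)
      simp only [one_smul, mul_one] at this
      linarith
    have htpos : 0 < t := by
      rcases ht.1.lt_or_eq with h | h
      · exact h
      · subst h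
        have := hle x (hCD hxC)
        simp at hgt'
        linarith
    have hxS : x ∈ thickening (r / 2) K := by
      by_contra hx
      have := hδS (t • z) (by simpa using (hnorm t ht).trans_lt hz1) x ⟨hxC, hx⟩
      have : 0 ≤ e * t := by positivity
      linarith
    have hCn : C ∈ 𝓝 x := mem_of_superset (isOpen_thickening.mem_nhds hxS)
      (thickening_subset_cthickening _ _)
    have hz0 : z ≠ 0 := by
      rintro rfl
      have := hle x (hCD hxC)
      have : 0 ≤ e * t := by positivity
      simp at hgt'
      linarith
    have hne : x + t • z ≠ x := by simp [hz0, htpos.ne']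
    have hloc : IsLocalMax (fun ζ => U (x + t • z + ζ) - V (x + ζ)) 0 := by
      have t1 : Tendsto (fun ζ : E => x + ζ) (𝓝 0) (𝓝 x) := by
        simpa using (by fun_prop : Continuous fun ζ : E => x + ζ).tendsto 0
      filter_upwards [t1.eventually hCn] with ζ hζ
      have := hmax (x + ζ) hζ t ht
      have h3 : x + ζ + t • z = x + t • z + ζ := by abel
      simp only [h3] at this
      simp only [add_zero]
      linarith
    have hslope : ∀ f : ℝ → ℝ, HasDerivAt f 0 0 → ∀ᶠ h in 𝓝[>] (0 : ℝ), |f h - f 0| < e * h := by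
      intro f hf
      have := (hasDerivAt_iff_isLittleO.1 hf).def (half_pos he)
      filter_upwards [this.filter_mono nhdsWithin_le_nhds, self_mem_nhdsWithin] with h hh hpos
      have hpos : 0 < h := hpos
      simp only [sub_zero, smul_zero, Real.norm_eq_abs, abs_of_pos hpos] at hh
      have : 0 < e * h := by positivity
      linarith
    have htt : ∀ᶠ h in 𝓝[>] (0 : ℝ), t - h ∈ Icc (0 : ℝ) 1 := by
      filter_upwards [self_mem_nhdsWithin, Ioo_mem_nhdsGT htpos] with h h1 h2
      exact ⟨by linarith [h2.2], by linarith [h2.1, ht.2]⟩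
    rcases hcontact (x + t • z) (hadd x hxC _ ((hnorm t ht).trans hz2)) x (hCD hxC) hne hloc
      with hd | hd
    · have hline : HasDerivAt (fun h : ℝ => x + (t - h) • z) (-z) 0 := by
        simpa using (((hasDerivAt_id (0 : ℝ)).const_sub t).smul_const z).const_add x
      have hd' : HasFDerivAt U (0 : E →L[ℝ] ℝ) (x + (t - 0) • z) := by simpa using hd
      have := hslope _ (by simpa using hd'.comp_hasDerivAt (0 : ℝ) hline)
      obtain ⟨h, hh, hh'⟩ := (this.and htt).exists
      have h4 := hmax x hxC (t - h) hh'
      simp only [Function.comp_apply, sub_zero] at hh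
      have := abs_lt.1 hh
      linarith
    · have hline : HasDerivAt (fun h : ℝ => x + h • z) z 0 := by
        simpa using ((hasDerivAt_id (0 : ℝ)).smul_const z).const_add x
      have hd' : HasFDerivAt V (0 : E →L[ℝ] ℝ) (x + (0 : ℝ) • z) := by simpa using hd
      have := hslope _ (by simpa using hd'.comp_hasDerivAt (0 : ℝ) hline)
      have hC' : ∀ᶠ h in 𝓝[>] (0 : ℝ), x + h • z ∈ C := by
        have : Tendsto (fun h : ℝ => x + h • z) (𝓝 0) (𝓝 x) := by
          simpa using hline.continuousAt.tendsto
        exact (this.eventually hCn).filter_mono nhdsWithin_le_nhds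
      obtain ⟨h, ⟨hh, hh'⟩, hhC⟩ := ((this.and htt).and hC').exists
      have h4 := hmax (x + h • z) hhC (t - h) hh'
      have h5 : x + h • z + (t - h) • z = x + t • z := by rw [sub_smul]; abel
      rw [h5] at h4
      simp only [Function.comp_apply, zero_smul, add_zero] at hh
      have := abs_lt.1 hh
      linarith
  intro x hx
  have hsmall : ∀ᶠ y in 𝓝 x, ‖y - x‖ < δ ∧ ‖y - x‖ ≤ r / 2 := by
    filter_upwards [ball_mem_nhds x (lt_min hδ (half_pos hr))] with y hy
    rw [mem_ball, dist_eq_norm] at hy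
    exact ⟨hy.trans_le (min_le_left _ _), (hy.trans_le (min_le_right _ _)).le⟩
  have hxC : C ∈ 𝓝 x := mem_of_superset (isOpen_thickening.mem_nhds (hKC hx))
    (thickening_subset_cthickening _ _)
  constructor
  · filter_upwards [hsmall] with y hy
    have := key (y - x) hy.1 hy.2 x (mem_of_mem_nhds hxC)
    have h2 := hKm x hx
    simp at this
    linarith
  · filter_upwards [hsmall, hxC] with y hy hyC
    have := key (x - y) (by rw [norm_sub_rev]; exact hy.1) (by rw [norm_sub_rev]; exact hy.2) y hyC
    have h2 := hKm x hx
    simp at this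
    linarith

end Doubling

section Comparison

variable {E : Type*} [NormedAddCommGroup E] [InnerProductSpace ℝ E]

lemma norm_normalize {x : E} (hx : x ≠ 0) : ‖‖x‖⁻¹ • x‖ = 1 := by
  rw [norm_smul, norm_inv, norm_norm, inv_mul_cancel₀ (norm_ne_zero_iff.2 hx)]

lemma norm_smul_normalize {x : E} (hx : x ≠ 0) : x = ‖x‖ • ‖x‖⁻¹ • x := by
  rw [smul_smul, mul_inv_cancel₀ (norm_ne_zero_iff.2 hx), one_smul]

variable [FiniteDimensional ℝ E]

/-- `v` solves the normalised equation `Δ_p v = σ |∇v|^q`, with `s = q - p + 2`, at the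
non-critical points of `D`. -/
structure IsRegSol (p s σ : ℝ) (D : Set E) (v : E → ℝ) : Prop where
  differentiableAt : ∀ x ∈ D, DifferentiableAt ℝ v x
  contDiffAt : ∀ x ∈ D, gradient v x ≠ 0 → ContDiffAt ℝ 1 (gradient v) x
  eq : ∀ x ∈ D, gradient v x ≠ 0 → ∀ ν : E, ‖ν‖ = 1 → gradient v x = ‖gradient v x‖ • ν →
    ellip p (fderiv ℝ (gradient v) x) ν = σ * ‖gradient v x‖ ^ s

/-- `H`, with gradient field `X`, is at `x` a classical strict subsolution. -/
def IsStrictSubAt (p s σ : ℝ) (H : E → ℝ) (X : E → E) (x : E) : Prop :=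
  (∀ᶠ y in 𝓝 x, HasGradientAt H (X y) y) ∧ ∃ L : E →L[ℝ] E, HasFDerivAt X L x ∧
    ∀ ν : E, ‖ν‖ = 1 → X x = ‖X x‖ • ν → σ * ‖X x‖ ^ s < ellip p L ν

lemma IsRegSol.mono {p s σ : ℝ} {D D' : Set E} {v : E → ℝ} (h : IsRegSol p s σ D v)
    (hD : D' ⊆ D) : IsRegSol p s σ D' v :=
  ⟨fun x hx => h.1 x (hD hx), fun x hx => h.2 x (hD hx), fun x hx => h.3 x (hD hx)⟩

lemma IsRegSol.continuousOn {p s σ : ℝ} {D : Set E} {v : E → ℝ} (h : IsRegSol p s σ D v) :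
    ContinuousOn v D :=
  fun x hx => (h.differentiableAt x hx).continuousAt.continuousWithinAt

lemma IsStrictSubAt.eq_zero_of_contact {p s σ : ℝ} (hp : 1 ≤ p) {H v : E → ℝ} {X : E → E}
    {a b : E} {D : Set E} (hD : IsOpen D) (hv : IsRegSol p s σ D v) (hb : b ∈ D)
    (h : IsStrictSubAt p s σ H X a)
    (hmax : IsLocalMax (fun ζ => H (a + ζ) - v (b + ζ)) 0) : X a = 0 := by
  obtain ⟨hX, L, hL, hlt⟩ := h
  have hvg : ∀ y ∈ D, HasGradientAt v (gradient v y) y := fun y hy =>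
    (hv.differentiableAt y hy).hasGradientAt
  have heq : X a = gradient v b := gradient_eq_of_isLocalMax hX.self_of_nhds (hvg b hb) hmax
  by_contra hne
  have hne' : gradient v b ≠ 0 := heq ▸ hne
  have hM := ((hv.contDiffAt b hb hne').differentiableAt one_ne_zero).hasFDerivAt
  have h1 := contact_of_isLocalMax hX
    (Filter.mem_of_superset (hD.mem_nhds hb) fun y hy => hvg y hy) hL hM hmax
  have h2 := ellip_nonpos hp h1 (norm_normalize hne)
  have h3 := hlt _ (norm_normalize hne) (norm_smul_normalize hne)
  have h4 := hv.eq b hb hne' _ (norm_normalize hne') (norm_smul_normalize hne')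
  rw [ellip_sub] at h2
  rw [heq] at h2 h3
  linarith

lemma IsStrictSubAt.not_isLocalMax [Nontrivial E] {p s σ : ℝ} (hp : 1 ≤ p) (hs : 0 < s)
    {H : E → ℝ} {X : E → E} {a : E} (h : IsStrictSubAt p s σ H X a) : ¬ IsLocalMax H a := by
  intro hmax
  obtain ⟨hX, L, hL, hlt⟩ := h
  have hX0 : X a = 0 := by
    have := hmax.hasFDerivAt_eq_zero (hasGradientAt_iff_hasFDerivAt.1 hX.self_of_nhds)
    exact (map_eq_zero_iff _ (InnerProductSpace.toDual ℝ E).injective).1 this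
  obtain ⟨ν, hν⟩ := exists_norm_eq E zero_le_one
  have h1 := hlt ν hν (by simp [hX0])
  have h2 := ellip_nonpos hp (inner_fderiv_nonpos_of_isLocalMax hX hL hmax) hν
  rw [hX0, norm_zero, Real.zero_rpow hs.ne'] at h1
  linarith

/-- Comparison of a solution with a strict classical subsolution. -/
theorem IsRegSol.le_of_isStrictSubAt [Nontrivial E] {p s σ : ℝ} (hp : 1 ≤ p) (hs : 0 < s)
    {C D : Set E} {v H : E → ℝ} {X : E → E} (hv : IsRegSol p s σ D v) (hC : IsCompact C)
    (hD : IsOpen D) (hDC : D ⊆ C) (hvc : ContinuousOn v C) (hHc : ContinuousOn H C)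
    (hH : ∀ x ∈ D, IsStrictSubAt p s σ H X x) (hbd : ∀ x ∈ C \ D, H x ≤ v x) :
    ∀ x ∈ C, H x ≤ v x := by
  intro x₁ hx₁
  by_contra! hlt
  have hwc : ContinuousOn (fun x => H x - v x) C := hHc.sub hvc
  obtain ⟨x₀, hx₀, hmax⟩ := hC.exists_isMaxOn ⟨x₁, hx₁⟩ hwc
  have hmax : ∀ x ∈ C, H x - v x ≤ H x₀ - v x₀ := fun x hx => hmax hx
  have hpos : 0 < H x₀ - v x₀ := by linarith [hmax x₁ hx₁]
  set K := C ∩ (fun x => H x - v x) ⁻¹' {H x₀ - v x₀} with hK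
  have hKC : IsCompact K := hC.of_isClosed_subset
    (hwc.preimage_isClosed_of_isClosed hC.isClosed isClosed_singleton) inter_subset_left
  have hKm : ∀ x ∈ K, H x - v x = H x₀ - v x₀ := fun x hx => hx.2
  have hKD : K ⊆ D := fun x hx => by
    by_contra hxD
    have := hbd x ⟨hx.1, hxD⟩
    linarith [hKm x hx]
  have := isLocalMax_and_isLocalMin_of_contact hD
    ((hHc.mono hDC).upperSemicontinuousOn) ((hvc.mono hDC).lowerSemicontinuousOn) hKC hKD hKm
    (fun x hx => lt_of_le_of_ne (hmax x (hDC hx.1)) fun h => hx.2 ⟨hDC hx.1, h⟩)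
    (fun a ha b hb _ hloc => Or.inl <| by
      have h0 := (hH a ha).eq_zero_of_contact hp hD hv hb hloc
      have h1 := hasGradientAt_iff_hasFDerivAt.1 (hH a ha).1.self_of_nhds
      simpa [h0] using h1)
    x₀ ⟨hx₀, rfl⟩
  exact (hH x₀ (hKD ⟨hx₀, rfl⟩)).not_isLocalMax hp hs this.1

end Comparison

section Radial

variable {E : Type*} [NormedAddCommGroup E] [InnerProductSpace ℝ E]

/-- The Hessian of a radial function centred at the origin, at the point `z`. -/
noncomputable def radialHess (ψ ψ' : ℝ) (z : E) : E →L[ℝ] E :=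
  ψ • ContinuousLinearMap.id ℝ E + (2 * ψ') • (innerSL ℝ z).smulRight z

lemma hasFDerivAt_norm_sub_sq (x y : E) :
    HasFDerivAt (fun w : E => ‖w - y‖ ^ 2) ((2 : ℝ) • innerSL ℝ (x - y)) x := by
  have := ((hasFDerivAt_id x).sub_const y).norm_sq
  refine this.congr_fderiv ?_
  ext w
  simp

lemma hasFDerivAt_radial_field {ψ : ℝ → ℝ} {ψ' : ℝ} {x y : E}
    (h : HasDerivAt ψ ψ' (‖x - y‖ ^ 2)) :
    HasFDerivAt (fun w : E => ψ (‖w - y‖ ^ 2) • (w - y))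
      (radialHess (ψ (‖x - y‖ ^ 2)) ψ' (x - y)) x := by
  have h1 := h.comp_hasFDerivAt x (hasFDerivAt_norm_sub_sq x y)
  have h2 := h1.smul ((hasFDerivAt_id x).sub_const y)
  refine h2.congr_fderiv ?_
  ext w
  simp only [radialHess, Function.comp_apply, id_eq, add_apply, smul_apply,
    ContinuousLinearMap.smulRight_apply, ContinuousLinearMap.id_apply, innerSL_apply_apply,
    smul_eq_mul, smul_smul]
  congr 2
  ring

variable [FiniteDimensional ℝ E]

lemma hasGradientAt_radial {Φ ψ : ℝ → ℝ} {x y : E}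
    (h : HasDerivAt Φ (ψ (‖x - y‖ ^ 2) / 2) (‖x - y‖ ^ 2)) :
    HasGradientAt (fun w : E => Φ (‖w - y‖ ^ 2)) (ψ (‖x - y‖ ^ 2) • (x - y)) x := by
  rw [hasGradientAt_iff_hasFDerivAt]
  refine (h.comp_hasFDerivAt x (hasFDerivAt_norm_sub_sq x y)).congr_fderiv ?_
  ext w
  simp only [smul_apply, innerSL_apply_apply, smul_eq_mul, map_smul,
    InnerProductSpace.toDual_apply_apply]
  ring

lemma ellip_radialHess (p ψ ψ' : ℝ) (z : E) {ν : E} (hν : ‖ν‖ = 1) :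
    ellip p (radialHess ψ ψ' z) ν = (Module.finrank ℝ E + p - 2) * ψ
      + 2 * ψ' * (‖z‖ ^ 2 + (p - 2) * inner ℝ z ν ^ 2) := by
  have h1 : ellip p (ContinuousLinearMap.id ℝ E) ν = Module.finrank ℝ E + p - 2 := by
    simp [ellip, hν]
    ring
  have h2 : ellip p ((innerSL ℝ z).smulRight z) ν = ‖z‖ ^ 2 + (p - 2) * inner ℝ z ν ^ 2 := by
    unfold ellip
    congr 1
    · rw [LinearMap.trace_eq_sum_inner _ (stdOrthonormalBasis ℝ E)]
      rw [← real_inner_self_eq_norm_sq, ← (stdOrthonormalBasis ℝ E).sum_inner_mul_inner z z]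
      simp [inner_smul_right]
    · simp [inner_smul_left]
      ring_nf
      simp
  rw [radialHess, ellip_add, ellip_smul, ellip_smul, h1, h2]
  ring

lemma isStrictSubAt_add_radial {p s σ : ℝ} {φ : E → ℝ} {Y : E → E} {L : E →L[ℝ] E}
    {Φ ψ : ℝ → ℝ} {ψ' : ℝ} {x y : E}
    (hY : ∀ᶠ w in 𝓝 x, HasGradientAt φ (Y w) w) (hL : HasFDerivAt Y L x)
    (hΦ : ∀ᶠ t in 𝓝 (‖x - y‖ ^ 2), HasDerivAt Φ (ψ t / 2) t)
    (hψ : HasDerivAt ψ ψ' (‖x - y‖ ^ 2))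
    (hlt : ∀ ν : E, ‖ν‖ = 1 → Y x + ψ (‖x - y‖ ^ 2) • (x - y)
        = ‖Y x + ψ (‖x - y‖ ^ 2) • (x - y)‖ • ν →
      σ * ‖Y x + ψ (‖x - y‖ ^ 2) • (x - y)‖ ^ s < ellip p L ν
        + ((Module.finrank ℝ E + p - 2) * ψ (‖x - y‖ ^ 2)
          + 2 * ψ' * (‖x - y‖ ^ 2 + (p - 2) * inner ℝ (x - y) ν ^ 2))) :
    IsStrictSubAt p s σ (fun w => φ w + Φ (‖w - y‖ ^ 2))
      (fun w => Y w + ψ (‖w - y‖ ^ 2) • (w - y)) x := by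
  have hcont : Tendsto (fun w : E => ‖w - y‖ ^ 2) (𝓝 x) (𝓝 (‖x - y‖ ^ 2)) :=
    (hasFDerivAt_norm_sub_sq x y).continuousAt
  refine ⟨?_, _, hL.add (hasFDerivAt_radial_field hψ), ?_⟩
  · filter_upwards [hY, hcont.eventually hΦ] with w h1 h2
    have h2 := hasGradientAt_radial h2
    rw [hasGradientAt_iff_hasFDerivAt] at *
    rw [map_add]
    exact h1.add h2
  · intro ν hν hX
    rw [ellip_add, ellip_radialHess _ _ _ _ hν]
    exact hlt ν hν hX

lemma isStrictSubAt_radial {p s σ : ℝ} {Φ ψ : ℝ → ℝ} {ψ' : ℝ} {x y : E}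
    (hψ0 : ψ (‖x - y‖ ^ 2) ≠ 0)
    (hΦ : ∀ᶠ t in 𝓝 (‖x - y‖ ^ 2), HasDerivAt Φ (ψ t / 2) t)
    (hψ : HasDerivAt ψ ψ' (‖x - y‖ ^ 2))
    (hlt : σ * (|ψ (‖x - y‖ ^ 2)| * ‖x - y‖) ^ s <
        (Module.finrank ℝ E + p - 2) * ψ (‖x - y‖ ^ 2) + 2 * (p - 1) * ψ' * ‖x - y‖ ^ 2) :
    IsStrictSubAt p s σ (fun w => Φ (‖w - y‖ ^ 2))
      (fun w => ψ (‖w - y‖ ^ 2) • (w - y)) x := by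
  have := isStrictSubAt_add_radial (p := p) (s := s) (σ := σ) (φ := fun _ => 0)
    (Y := fun _ : E => 0) (L := 0) (x := x) (y := y)
    (Eventually.of_forall fun w => hasGradientAt_const w (0 : ℝ)) (hasFDerivAt_const 0 x) hΦ hψ ?_
  · simpa using this
  · intro ν hν hX
    simp only [zero_add] at hX ⊢
    set c := ψ (‖x - y‖ ^ 2) with hc
    have hinner : inner ℝ (x - y) ν ^ 2 = ‖x - y‖ ^ 2 := by
      have h1 : c * inner ℝ (x - y) ν = ‖c • (x - y)‖ := by
        have := congrArg (fun w => inner ℝ w ν) hX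
        simpa [inner_smul_left, hν] using this
      rw [norm_smul, Real.norm_eq_abs] at h1
      have h2 : c ^ 2 * inner ℝ (x - y) ν ^ 2 = c ^ 2 * ‖x - y‖ ^ 2 := by
        rw [← mul_pow, h1, mul_pow, sq_abs]
      exact mul_left_cancel₀ (pow_ne_zero 2 hψ0) h2
    rw [hinner, norm_smul, Real.norm_eq_abs]
    have h0 : ellip p (0 : E →L[ℝ] E) ν = 0 := by simp [ellip]
    rw [h0]
    calc _ < _ := hlt
      _ = _ := by ring

end Radial

section StrongMaximum

variable {E : Type*} [NormedAddCommGroup E] [InnerProductSpace ℝ E] [FiniteDimensional ℝ E]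

lemma eventually_mul_rpow_lt {a b c : ℝ} (ha : 0 < a) (hc : 0 < c) :
    ∀ᶠ x : ℝ in 𝓝[>] 0, b * x ^ a < c := by
  have : Tendsto (fun x : ℝ => b * x ^ a) (𝓝[>] 0) (𝓝 (b * 0 ^ a)) :=
    ((Real.continuousAt_rpow_const 0 a (Or.inr ha.le)).tendsto.const_mul b).mono_left
      nhdsWithin_le_nhds
  rw [Real.zero_rpow ha.ne', mul_zero] at this
  exact this.eventually_lt_const hc

/-- The radial barrier used in the boundary point lemma. -/
lemma exists_isStrictSubAt_annulus {p s σ : ℝ} (hp : 1 < p) (hs : 1 < s) {R m μ : ℝ}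
    (hR : 0 < R) (hμ : m < μ) (y : E) :
    ∃ Φ ψ : ℝ → ℝ, Φ (R ^ 2) = m ∧ ψ (R ^ 2) ≠ 0 ∧ (∀ t, R ^ 2 ≤ t → Φ t ≤ m) ∧
      (∀ t, (R / 2) ^ 2 ≤ t → Φ t ≤ μ ∧ ContinuousAt Φ t) ∧
      ∀ x : E, R / 2 < ‖x - y‖ → ‖x - y‖ < 3 * R / 2 →
        IsStrictSubAt p s σ (fun w => Φ (‖w - y‖ ^ 2))
          (fun w => ψ (‖w - y‖ ^ 2) • (w - y)) x := by
  obtain ⟨k, hk⟩ := exists_nat_ge ((Module.finrank ℝ E + p - 1) / (2 * (p - 1)))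
  rw [div_le_iff₀ (by linarith)] at hk
  set α : ℝ := k + 1 with hα
  have hα1 : 1 ≤ α := by rw [hα]; linarith [(Nat.cast_nonneg k : (0:ℝ) ≤ k)]
  have hα0 : 0 < α := by linarith
  set Q : ℝ := ((R / 2) ^ 2) ^ (-(α + 1)) with hQ
  have hQ0 : 0 < Q := by positivity
  have hsmall : ∀ᶠ ε : ℝ in 𝓝[>] 0, 0 < ε ∧
      |σ| * (2 * α * Q) ^ (s - 1) * (3 * R / 2) ^ s * ε ^ (s - 1) < 1 ∧
      ((R / 2) ^ 2) ^ (-α) * ε ^ (1 : ℝ) < μ - m :=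
    (eventually_mem_nhdsWithin.mono fun _ h => h).and
      ((eventually_mul_rpow_lt (by linarith) one_pos).and
        (eventually_mul_rpow_lt one_pos (by linarith)))
  obtain ⟨ε, hε, h1, h2⟩ := hsmall.exists
  rw [Real.rpow_one] at h2
  have hR2 : 0 < (R / 2) ^ 2 := by positivity
  have hdec : ∀ {a b c : ℝ}, 0 ≤ c → 0 < a → a ≤ b → b ^ (-c) ≤ a ^ (-c) := fun hc ha hab =>
    Real.rpow_le_rpow_of_nonpos ha hab (by linarith)
  have hΦ : ∀ t : ℝ, 0 < t → HasDerivAt (fun t => m + ε * (t ^ (-α) - (R ^ 2) ^ (-α)))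
      ((-(2 * α * ε) * t ^ (-(α + 1))) / 2) t := fun t ht => by
    have := (((Real.hasDerivAt_rpow_const (p := -α) (Or.inl ht.ne')).sub_const
      ((R ^ 2) ^ (-α))).const_mul ε).const_add m
    refine this.congr_deriv ?_
    rw [show -α - 1 = -(α + 1) by ring]; ring
  have hψ : ∀ t : ℝ, 0 < t → HasDerivAt (fun t => -(2 * α * ε) * t ^ (-(α + 1)))
      (2 * α * ε * (α + 1) * (t ^ (-(α + 1)) / t)) t := fun t ht => by
    have := (Real.hasDerivAt_rpow_const (p := -(α + 1)) (Or.inl ht.ne')).const_mul (-(2 * α * ε))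
    refine this.congr_deriv ?_
    rw [Real.rpow_sub_one ht.ne']; ring
  refine ⟨fun t => m + ε * (t ^ (-α) - (R ^ 2) ^ (-α)), fun t => -(2 * α * ε) * t ^ (-(α + 1)),
    by simp, ?_, ?_, ?_, ?_⟩
  · have : 0 < 2 * α * ε * (R ^ 2) ^ (-(α + 1)) := by positivity
    simp only; linarith
  · intro t ht
    have := hdec hα0.le (by positivity) ht
    simp only; nlinarith
  · intro t ht
    refine ⟨?_, (hΦ t (hR2.trans_le ht)).continuousAt⟩
    have h3 := hdec hα0.le hR2 ht
    have h4 : 0 < (R ^ 2) ^ (-α) := by positivity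
    simp only; nlinarith
  · intro x hx1 hx2
    have hr : 0 < ‖x - y‖ := by linarith
    have ht : 0 < ‖x - y‖ ^ 2 := by positivity
    set r := ‖x - y‖ with hr'
    have hT0 : 0 < (r ^ 2) ^ (-(α + 1)) := by positivity
    have hTQ : (r ^ 2) ^ (-(α + 1)) ≤ Q := hdec (by linarith) hR2 (by gcongr)
    refine isStrictSubAt_radial (mul_neg_of_neg_of_pos (by nlinarith) hT0).ne
      (Filter.mem_of_superset (Ioi_mem_nhds ht) fun t ht => hΦ t ht) (hψ _ ht) ?_
    rw [← hr']
    set T := (r ^ 2) ^ (-(α + 1)) with hT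
    have habs : |-(2 * α * ε) * T| = 2 * α * ε * T := by
      rw [neg_mul, abs_neg, abs_of_pos (by positivity)]
    rw [habs]
    have e1 : (2 * α * ε * T * r) ^ s = 2 * α * ε * T * ((2 * α * ε * T) ^ (s - 1) * r ^ s) := by
      rw [Real.mul_rpow (by positivity) hr.le, ← mul_assoc]
      congr 1
      rw [Real.rpow_sub_one (by positivity)]
      field_simp
    have e2 : (2 * α * ε * T) ^ (s - 1) * r ^ s ≤
        (2 * α * Q) ^ (s - 1) * (3 * R / 2) ^ s * ε ^ (s - 1) := by
      have : (2 * α * ε * T) ^ (s - 1) ≤ (2 * α * Q * ε) ^ (s - 1) :=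
        Real.rpow_le_rpow (by positivity) (by nlinarith [mul_pos hα0 hε]) (by linarith)
      rw [Real.mul_rpow (by positivity) hε.le] at this
      have h3 : r ^ s ≤ (3 * R / 2) ^ s := Real.rpow_le_rpow hr.le hx2.le (by linarith)
      calc _ ≤ (2 * α * Q) ^ (s - 1) * ε ^ (s - 1) * (3 * R / 2) ^ s := by gcongr
        _ = _ := by ring
    have e3 : σ * ((2 * α * ε * T) ^ (s - 1) * r ^ s) < 1 := by
      calc _ ≤ |σ| * ((2 * α * ε * T) ^ (s - 1) * r ^ s) := by
            gcongr; exact le_abs_self σ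
        _ ≤ |σ| * ((2 * α * Q) ^ (s - 1) * (3 * R / 2) ^ s * ε ^ (s - 1)) := by gcongr
        _ < 1 := by linarith [h1]
    have e4 : 0 < 2 * α * ε * T := by positivity
    have e5 : 1 ≤ 2 * (p - 1) * (α + 1) - (Module.finrank ℝ E + p - 2) := by
      rw [hα]; nlinarith
    calc _ = 2 * α * ε * T * (σ * ((2 * α * ε * T) ^ (s - 1) * r ^ s)) := by rw [e1]; ring
      _ < 2 * α * ε * T * 1 := by gcongr
      _ ≤ 2 * α * ε * T * (2 * (p - 1) * (α + 1) - (Module.finrank ℝ E + p - 2)) := by gcongr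
      _ = _ := by field_simp; ring

/-- Strong minimum principle. -/
theorem IsRegSol.eventually_eq_of_isLocalMin [Nontrivial E] {p s σ : ℝ} (hp : 1 < p) (hs : 1 < s)
    {D : Set E} {v : E → ℝ} (hv : IsRegSol p s σ D v) (hD : IsOpen D) {x₀ : E} (hx₀ : x₀ ∈ D)
    (hmin : IsLocalMin v x₀) : ∀ᶠ y in 𝓝 x₀, v y = v x₀ := by
  obtain ⟨δ, hδ, hball⟩ := Metric.eventually_nhds_iff_ball.1
    ((show ∀ᶠ y in 𝓝 x₀, y ∈ D from hD.mem_nhds hx₀).and hmin)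
  refine Metric.eventually_nhds_iff_ball.2 ⟨δ / 4, by linarith, fun y hy => ?_⟩
  by_contra hne
  set m := v x₀ with hm
  rw [mem_ball] at hy
  have hcb : closedBall x₀ (δ / 2) ⊆ D := fun z hz =>
    (hball z (closedBall_subset_ball (by linarith) hz)).1
  have hZc : IsCompact (closedBall x₀ (δ / 2) ∩ v ⁻¹' {m}) :=
    (isCompact_closedBall x₀ (δ / 2)).of_isClosed_subset
      ((hv.continuousOn.mono hcb).preimage_isClosed_of_isClosed isClosed_closedBall
        isClosed_singleton) inter_subset_left
  obtain ⟨x₁, ⟨hx₁, hx₁m⟩, hx₁min⟩ := hZc.exists_isMinOn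
    ⟨x₀, mem_closedBall_self (by linarith), rfl⟩
    (continuous_const.dist continuous_id : Continuous fun z => dist y z).continuousOn
  have hx₁m : v x₁ = m := hx₁m
  set R := dist y x₁ with hRdef
  have hRle : R ≤ dist y x₀ := hx₁min ⟨mem_closedBall_self (by linarith), rfl⟩
  have hRpos : 0 < R := dist_pos.2 fun h => hne (h ▸ hx₁m)
  have hinside : ∀ z, dist z y < R → m < v z := by
    intro z hz
    have hzx : dist z x₀ < δ / 2 := by linarith [dist_triangle z y x₀]
    refine lt_of_le_of_ne (hball z (by rw [mem_ball]; linarith)).2 fun h => ?_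
    have : R ≤ dist y z := hx₁min ⟨hzx.le, h.symm⟩
    rw [dist_comm] at hz
    linarith
  have hann : ∀ z, dist z y ≤ 3 * R / 2 → z ∈ ball x₀ δ := fun z hz => by
    rw [mem_ball]; linarith [dist_triangle z y x₀]
  obtain ⟨μ, hμ, hμv⟩ : ∃ μ, m < μ ∧ ∀ z ∈ sphere y (R / 2), μ ≤ v z := by
    have hcont : ContinuousOn v (sphere y (R / 2)) := hv.continuousOn.mono fun z hz =>
      (hball z (hann z (by rw [mem_sphere.1 hz]; linarith))).1
    have hne : (sphere y (R / 2)).Nonempty := NormedSpace.sphere_nonempty.2 (by linarith)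
    obtain ⟨z, hz, hzmin⟩ := (isCompact_sphere y (R / 2)).exists_isMinOn hne hcont
    exact ⟨v z, hinside z (by rw [mem_sphere.1 hz]; linarith), fun w hw => hzmin hw⟩
  obtain ⟨Φ, ψ, hΦR, hψR, hΦout, hΦin, hstrict⟩ :=
    exists_isStrictSubAt_annulus (σ := σ) hp hs hRpos hμ y
  set C := closedBall y (3 * R / 2) \ ball y (R / 2) with hC
  set A := ball y (3 * R / 2) \ closedBall y (R / 2) with hA
  have hCc : IsCompact C := (isCompact_closedBall _ _).diff isOpen_ball
  have hAo : IsOpen A := isOpen_ball.sdiff isClosed_closedBall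
  have hAC : A ⊆ C := sdiff_subset_sdiff ball_subset_closedBall ball_subset_closedBall
  have hCD : ∀ z ∈ C, z ∈ ball x₀ δ := fun z hz => hann z (mem_closedBall.1 hz.1)
  have hsq : ∀ {a z}, 0 ≤ a → a ≤ dist z y → a ^ 2 ≤ ‖z - y‖ ^ 2 := fun ha h => by
    rw [← dist_eq_norm]; gcongr
  have hCin : ∀ z ∈ C, (R / 2) ^ 2 ≤ ‖z - y‖ ^ 2 := fun z hz =>
    hsq (by linarith) (not_lt.1 hz.2)
  have key := IsRegSol.le_of_isStrictSubAt (H := fun w => Φ (‖w - y‖ ^ 2))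
    (X := fun w => ψ (‖w - y‖ ^ 2) • (w - y)) hp.le (by linarith : 0 < s)
    (hv.mono (D' := A) fun z hz => (hball z (hCD z (hAC hz))).1) hCc hAo hAC
    (hv.continuousOn.mono fun z hz => (hball z (hCD z hz)).1)
    (fun z hz => ((hΦin _ (hCin z hz)).2.comp (f := fun w => ‖w - y‖ ^ 2)
      (by fun_prop)).continuousWithinAt)
    (fun z hz => hstrict z (by rw [← dist_eq_norm]; exact not_le.1 hz.2)
      (by rw [← dist_eq_norm]; exact hz.1))
    (fun z hz => by
      by_cases h : dist z y < R
      · have : z ∈ sphere y (R / 2) := by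
          by_contra hn
          exact hz.2 ⟨mem_ball.2 (by linarith), fun hcb => hz.1.2
            (lt_of_le_of_ne (mem_closedBall.1 hcb) hn)⟩
        exact (hΦin _ (hCin z hz.1)).1.trans (hμv z this)
      · exact (hΦout _ (hsq hRpos.le (not_lt.1 h))).trans (hball z (hCD z hz.1)).2)
  have hx₁R : ‖x₁ - y‖ = R := by rw [← dist_eq_norm, dist_comm]
  have hx₁A : x₁ ∈ A := by
    refine ⟨?_, ?_⟩
    · rw [mem_ball, dist_eq_norm, hx₁R]; linarith
    · rw [mem_closedBall, dist_eq_norm, hx₁R]; linarith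
  have hloc : IsLocalMax (fun ζ => Φ (‖x₁ + ζ - y‖ ^ 2) - v (x₁ + ζ)) 0 := by
    have htend : Tendsto (fun ζ : E => x₁ + ζ) (𝓝 0) (𝓝 x₁) := by
      simpa using (by fun_prop : Continuous fun ζ : E => x₁ + ζ).tendsto 0
    filter_upwards [htend (hAo.mem_nhds hx₁A)] with ζ hζ
    have := key _ (hAC hζ)
    simp only [add_zero, hx₁R, hΦR, hx₁m]
    simp only at this
    linarith
  have := (hstrict x₁ (by linarith) (by linarith)).eq_zero_of_contact hp.le hD hv
    (hball _ (hCD _ (hAC hx₁A))).1 hloc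
  rw [hx₁R] at this
  rcases smul_eq_zero.1 this with h | h
  · exact hψR h
  · rw [h, norm_zero] at hx₁R
    linarith

end StrongMaximum

section Removability

lemma exists_barrier_coeff {n p γ A : ℝ} (hn : 2 ≤ n) (hp : 1 < p) (hpn : p ≤ n) (hγ0 : 0 < γ)
    (hγ1 : γ < 1) (hγ2 : γ < n + p - 3) (hA : 0 ≤ A) :
    ∃ c κ : ℝ, 0 < c ∧ c ≤ 1 ∧ 0 < κ ∧ ∀ ρ τ : ℝ, 0 < ρ → 0 ≤ τ → τ ≤ 1 →
      (c * ρ + ρ ^ γ) ^ 2 * τ ≤ A ^ 2 →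
      κ * ρ ^ γ ≤ c * ρ * (n - p + 2 * (p - 2) * τ)
        + ρ ^ γ * (n - 1 - γ * (p - 1) + (p - 2) * (1 + γ) * τ) := by
  have hκ1 : 0 < n - 1 - γ * (p - 1) := by nlinarith
  rcases le_or_gt 2 p with hp2 | hp2
  · refine ⟨1, n - 1 - γ * (p - 1), one_pos, le_rfl, hκ1, fun ρ τ hρ hτ0 _ _ => ?_⟩
    have h1 : 0 ≤ n - p + 2 * (p - 2) * τ := by
      have : 0 ≤ (p - 2) * τ := mul_nonneg (by linarith) hτ0
      linarith
    have h2 : 0 ≤ (p - 2) * (1 + γ) * τ :=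
      mul_nonneg (mul_nonneg (by linarith) (by linarith)) hτ0
    have h3 : 0 < ρ ^ γ := by positivity
    nlinarith [mul_nonneg hρ.le h1, mul_nonneg h3.le h2]
  · set κ₀ := min (n - 1 - γ * (p - 1)) (n + p - 3 - γ) with hκ₀
    have hκ₀pos : 0 < κ₀ := lt_min hκ1 (by linarith)
    set M := (2 * A) ^ ((1 - γ) / γ) with hM
    have hM0 : 0 ≤ M := by positivity
    refine ⟨min 1 (κ₀ / (4 * (M + 1))), κ₀ / 2, by positivity, min_le_left _ _, by positivity,
      fun ρ τ hρ hτ0 hτ1 hA2 => ?_⟩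
    set c := min 1 (κ₀ / (4 * (M + 1))) with hc
    have hc0 : 0 < c := by positivity
    have hP : 0 < ρ ^ γ := by positivity
    have hb2 : κ₀ ≤ n - 1 - γ * (p - 1) + (p - 2) * (1 + γ) * τ := by
      have h1 : κ₀ ≤ n - 1 - γ * (p - 1) := min_le_left _ _
      have h2 : κ₀ ≤ n + p - 3 - γ := min_le_right _ _
      nlinarith
    have hb2' := mul_le_mul_of_nonneg_left hb2 hP.le
    rcases le_or_gt τ (1 / 2) with hτ | hτ
    · have h1 : 0 ≤ n - p + 2 * (p - 2) * τ := by nlinarith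
      have := mul_nonneg (mul_pos hc0 hρ).le h1
      nlinarith
    · have h1 : -2 ≤ n - p + 2 * (p - 2) * τ := by nlinarith
      have h2 : ρ ^ γ ≤ 2 * A := by
        have h3 : ρ ^ γ ≤ c * ρ + ρ ^ γ := by linarith [mul_pos hc0 hρ]
        have h4 : (ρ ^ γ) ^ 2 ≤ (2 * A) ^ 2 := by nlinarith
        exact (pow_le_pow_iff_left₀ hP.le (by positivity) two_ne_zero).1 h4
      have h3 : ρ = ρ ^ γ * ρ ^ (1 - γ) := by
        rw [← Real.rpow_add hρ]; simp
      have h4 : ρ ^ (1 - γ) ≤ M := by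
        have : ρ ^ (1 - γ) = (ρ ^ γ) ^ ((1 - γ) / γ) := by
          rw [← Real.rpow_mul hρ.le]; congr 1; field_simp
        rw [this]
        exact Real.rpow_le_rpow hP.le h2 (div_nonneg (by linarith) hγ0.le)
      have h5 : c * (4 * (M + 1)) ≤ κ₀ := by
        rw [← le_div_iff₀ (by positivity)]; exact min_le_right _ _
      have h6 : c * ρ * 2 ≤ ρ ^ γ * (κ₀ / 2) := by
        calc c * ρ * 2 = ρ ^ γ * (2 * c * ρ ^ (1 - γ)) := by linear_combination 2 * c * h3
          _ ≤ ρ ^ γ * (κ₀ / 2) := by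
            gcongr
            nlinarith [mul_le_mul_of_nonneg_left h4 hc0.le]
      have h7 := mul_le_mul_of_nonneg_left h1 (mul_pos hc0 hρ).le
      nlinarith

lemma exists_barrier_radius {s γ κ C : ℝ} (hs : 1 < s) (hsγ : s - 1 < γ) (hγ1 : γ < 1)
    (hκ : 0 < κ) (hC : 0 ≤ C) :
    ∃ R : ℝ, 0 < R ∧ ∀ c ε r : ℝ, 0 ≤ c → c ≤ 1 → 0 < ε → ε ≤ 1 → 0 < r → r < R →
      C * (c * (ε / r) + (ε / r) ^ γ) ^ s < κ * (ε / r) ^ γ / r := by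
  obtain ⟨R, h1, hR0, hR1⟩ := ((eventually_mul_rpow_lt (b := C * 2 ^ s)
    (show 0 < 1 - s + γ by linarith) hκ).and (Ioc_mem_nhdsGT (zero_lt_one' ℝ))).exists
  refine ⟨R, hR0, fun c ε r hc0 hc1 hε0 hε1 hr hrR => ?_⟩
  set ρ := ε / r with hρ
  have hρ0 : 0 < ρ := div_pos hε0 hr
  have hP : 0 < ρ ^ γ := by positivity
  have hs0 : 0 ≤ s := by linarith
  have hRδ : r ^ (1 - s + γ) ≤ R ^ (1 - s + γ) :=
    Real.rpow_le_rpow hr.le hrR.le (by linarith)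
  rw [lt_div_iff₀ hr]
  suffices h : (c * ρ + ρ ^ γ) ^ s * r ≤ 2 ^ s * ρ ^ γ * r ^ (1 - s + γ) by
    calc C * (c * ρ + ρ ^ γ) ^ s * r = C * ((c * ρ + ρ ^ γ) ^ s * r) := by ring
      _ ≤ C * (2 ^ s * ρ ^ γ * R ^ (1 - s + γ)) :=
        mul_le_mul_of_nonneg_left (h.trans (by gcongr)) hC
      _ = C * 2 ^ s * R ^ (1 - s + γ) * ρ ^ γ := by ring
      _ < κ * ρ ^ γ := by gcongr
  rcases le_or_gt ρ 1 with hle | hgt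
  · have h2 : ρ ≤ ρ ^ γ := by
      simpa using Real.rpow_le_rpow_of_exponent_ge hρ0 hle hγ1.le
    have h3 : c * ρ + ρ ^ γ ≤ 2 * ρ ^ γ := by nlinarith
    have h4 : (ρ ^ γ) ^ s ≤ ρ ^ γ := by
      simpa using Real.rpow_le_rpow_of_exponent_ge hP
        (Real.rpow_le_one hρ0.le hle (by linarith)) hs.le
    have h5 : r ≤ r ^ (1 - s + γ) := by
      simpa using Real.rpow_le_rpow_of_exponent_ge hr (by linarith)
        (show 1 - s + γ ≤ 1 by linarith)
    calc (c * ρ + ρ ^ γ) ^ s * r ≤ (2 * ρ ^ γ) ^ s * r := by gcongr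
      _ = 2 ^ s * (ρ ^ γ) ^ s * r := by rw [Real.mul_rpow (by norm_num) hP.le]
      _ ≤ _ := by gcongr
  · have h2 : ρ ^ γ ≤ ρ := by
      simpa using Real.rpow_le_rpow_of_exponent_le hgt.le hγ1.le
    have h3 : c * ρ + ρ ^ γ ≤ 2 * ρ := by nlinarith
    have h4 : ρ ^ s * r = ρ ^ γ * (ε ^ (s - γ) * r ^ (1 - s + γ)) := by
      have e1 : ρ ^ s = ρ ^ γ * ρ ^ (s - γ) := by rw [← Real.rpow_add hρ0]; congr 1; ring
      have e2 : r ^ (1 - s + γ) = r / r ^ (s - γ) := by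
        rw [show 1 - s + γ = 1 - (s - γ) by ring, Real.rpow_sub hr, Real.rpow_one]
      rw [e1, e2, hρ, Real.div_rpow hε0.le hr.le (s - γ)]
      ring
    calc (c * ρ + ρ ^ γ) ^ s * r ≤ (2 * ρ) ^ s * r := by gcongr
      _ = 2 ^ s * (ρ ^ s * r) := by rw [Real.mul_rpow (by norm_num) hρ0.le]; ring
      _ = 2 ^ s * (ρ ^ γ * (ε ^ (s - γ) * r ^ (1 - s + γ))) := by rw [h4]
      _ ≤ 2 ^ s * (ρ ^ γ * (1 * r ^ (1 - s + γ))) := by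
        gcongr
        exact Real.rpow_le_one hε0.le hε1 (by linarith)
      _ = _ := by ring


variable {E : Type*} [NormedAddCommGroup E] [InnerProductSpace ℝ E]

lemma sq_mul_sub_inner_sq_le {e z ν : E} {ψ A : ℝ} (hν : ‖ν‖ = 1) (he : ‖e‖ ≤ A)
    (h : e + ψ • z = ‖e + ψ • z‖ • ν) : ψ ^ 2 * (‖z‖ ^ 2 - inner ℝ z ν ^ 2) ≤ A ^ 2 := by
  set l := ‖e + ψ • z‖
  have he' : e = l • ν - ψ • z := eq_sub_of_add_eq h
  have h1 : inner ℝ e ν = l - ψ * inner ℝ z ν := by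
    rw [he']; simp [inner_sub_left, inner_smul_left, hν]
  have h2 : ‖e‖ ^ 2 = l ^ 2 - 2 * (l * (ψ * inner ℝ z ν)) + ψ ^ 2 * ‖z‖ ^ 2 := by
    rw [he', norm_sub_sq_real, norm_smul, norm_smul, inner_smul_left, inner_smul_right, hν,
      real_inner_comm]
    simp [mul_pow]
  have h3 : ‖e‖ ^ 2 ≤ A ^ 2 := by gcongr
  have h4 : ψ ^ 2 * (‖z‖ ^ 2 - inner ℝ z ν ^ 2) = ‖e‖ ^ 2 - inner ℝ e ν ^ 2 := by
    rw [h2, h1]; ring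
  linarith [sq_nonneg (inner ℝ e ν)]

variable [FiniteDimensional ℝ E]

/-- The gradient profile of the singular barrier. -/
lemma hasDerivAt_barrier {c ε γ d t : ℝ} (hγ1 : γ < 1) (ht : 0 < t) :
    HasDerivAt (fun t => c * ε / 2 * (Real.log t - Real.log d)
        + ε ^ γ / (1 - γ) * (t ^ ((1 - γ) / 2) - d ^ ((1 - γ) / 2)))
      ((c * ε * t⁻¹ + ε ^ γ * t ^ (-((1 + γ) / 2))) / 2) t := by
  have h1 := (((Real.hasDerivAt_log ht.ne').sub_const (Real.log d)).const_mul (c * ε / 2)).add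
    (((Real.hasDerivAt_rpow_const (p := (1 - γ) / 2) (Or.inl ht.ne')).sub_const
      (d ^ ((1 - γ) / 2))).const_mul (ε ^ γ / (1 - γ)))
  refine h1.congr_deriv ?_
  rw [show (1 - γ) / 2 - 1 = -((1 + γ) / 2) by ring]
  have : (1 - γ) ≠ 0 := by linarith
  field_simp

lemma hasDerivAt_barrier_field {c ε γ t : ℝ} (ht : 0 < t) :
    HasDerivAt (fun t => c * ε * t⁻¹ + ε ^ γ * t ^ (-((1 + γ) / 2)))
      (-(c * ε * t⁻¹ + (1 + γ) / 2 * (ε ^ γ * t ^ (-((1 + γ) / 2)))) / t) t := by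
  have h1 := ((hasDerivAt_inv ht.ne').const_mul (c * ε)).add
    ((Real.hasDerivAt_rpow_const (p := -((1 + γ) / 2)) (Or.inl ht.ne')).const_mul (ε ^ γ))
  refine h1.congr_deriv ?_
  rw [Real.rpow_sub_one ht.ne']
  field_simp
  ring

/-- A solution that is bounded below near an isolated singularity lies above a suitable smooth
function as soon as it does so on a small sphere. -/
theorem IsRegSol.le_of_le_sphere [Nontrivial E] {p s σ γ : ℝ}
    (hn : (2 : ℝ) ≤ Module.finrank ℝ E) (hp : 1 < p) (hpn : p ≤ Module.finrank ℝ E) (hs : 1 < s)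
    (hsγ : s - 1 < γ) (hγ1 : γ < 1) (hγ2 : γ < Module.finrank ℝ E + p - 3)
    {Y : E → E} {M : E → E →L[ℝ] E} {R₁ A C : ℝ} (hR₁ : 0 < R₁)
    (hY : ∀ y ∈ ball (0 : E) R₁, HasFDerivAt Y (M y) y)
    (hA : ∀ y ∈ ball (0 : E) R₁, ‖Y y‖ ≤ A) (hC : 0 ≤ C)
    (hkey : ∀ y ∈ ball (0 : E) R₁, ∀ X ν : E, ‖ν‖ = 1 → X = ‖X‖ • ν →
      σ * ‖X‖ ^ s - ellip p (M y) ν ≤ C * ‖X - Y y‖ ^ s) :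
    ∃ R₀, 0 < R₀ ∧ R₀ ≤ R₁ ∧ ∀ R, 0 < R → R < R₀ → ∀ φ v : E → ℝ,
      (∀ y ∈ ball (0 : E) R₁, HasGradientAt φ (Y y) y) →
      IsRegSol p s σ (ball 0 R₀ \ {0}) v → (∃ B, ∀ᶠ x in 𝓝[≠] (0 : E), B ≤ v x) →
      (∀ x ∈ sphere (0 : E) R, φ x ≤ v x) → ∀ x ∈ ball (0 : E) R \ {0}, φ x ≤ v x := by
  have hγ0 : 0 < γ := by linarith
  have hA0 : 0 ≤ A := (norm_nonneg _).trans (hA 0 (mem_ball_self hR₁))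
  obtain ⟨c, κ, hc0, hc1, hκ, hcoef⟩ := exists_barrier_coeff hn hp hpn hγ0 hγ1 hγ2 hA0
  obtain ⟨R₂, hR₂, hrad⟩ := exists_barrier_radius hs hsγ hγ1 hκ hC
  refine ⟨min R₁ R₂, lt_min hR₁ hR₂, min_le_left _ _, 
    fun R hR hRR φ v hφ hv ⟨B, hB⟩ hbd x hx => ?_⟩
  have hRR1 : R < R₁ := hRR.trans_le (min_le_left _ _)
  have hRR2 : R < R₂ := hRR.trans_le (min_le_right _ _)
  set Φ : ℝ → ℝ → ℝ := fun ε t => c * ε / 2 * (Real.log t - Real.log (R ^ 2))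
        + ε ^ γ / (1 - γ) * (t ^ ((1 - γ) / 2) - (R ^ 2) ^ ((1 - γ) / 2)) with hΦ
  set ψ : ℝ → ℝ → ℝ := fun ε t => c * ε * t⁻¹ + ε ^ γ * t ^ (-((1 + γ) / 2)) with hψ
  have hstrict : ∀ ε, 0 < ε → ε ≤ 1 → ∀ y ∈ ball (0 : E) R \ {0},
      IsStrictSubAt p s σ (fun w => φ w + Φ ε (‖w - 0‖ ^ 2))
        (fun w => Y w + ψ ε (‖w - 0‖ ^ 2) • (w - 0)) y := by
    intro ε hε0 hε1 y hy
    have hy1 : y ∈ ball (0 : E) R₁ := ball_subset_ball hRR1.le hy.1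
    have hr : 0 < ‖y - 0‖ := by rw [sub_zero]; exact norm_pos_iff.2 hy.2
    have ht : 0 < ‖y - 0‖ ^ 2 := by positivity
    refine isStrictSubAt_add_radial
      (Filter.mem_of_superset (isOpen_ball.mem_nhds hy1) fun w hw => hφ w hw) (hY y hy1)
      (Filter.mem_of_superset (Ioi_mem_nhds ht) fun t ht => hasDerivAt_barrier hγ1 ht)
      (hasDerivAt_barrier_field ht) ?_
    intro ν hν hX
    simp only [sub_zero] at hr ht hX ⊢
    set r := ‖y‖ with hrdef
    have hrR : r < R₂ := by
      have : r < R := by simpa using hy.1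
      linarith
    set ρ := ε / r with hρ
    have hρ0 : 0 < ρ := div_pos hε0 hr
    have hpow : ε ^ γ * (r ^ 2) ^ (-((1 + γ) / 2)) = ρ ^ γ / r := by
      rw [hρ, Real.div_rpow hε0.le hr.le, ← Real.rpow_natCast r 2, ← Real.rpow_mul hr.le,
        show ((2 : ℕ) : ℝ) * -((1 + γ) / 2) = -γ - 1 by push_cast; ring, Real.rpow_sub_one hr.ne',
        Real.rpow_neg hr.le]
      field_simp
    have hψr : ψ ε (r ^ 2) = (c * ρ + ρ ^ γ) / r := by
      simp only [hψ]
      rw [hpow, hρ]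
      field_simp
    have hg : ‖ψ ε (r ^ 2) • y‖ = c * ρ + ρ ^ γ := by
      rw [norm_smul, hψr, Real.norm_eq_abs, abs_of_pos (by positivity), ← hrdef]
      field_simp
    have h1 := hkey y hy1 _ ν hν hX
    rw [add_sub_cancel_left, hg] at h1
    have h2 := hrad c ε r hc0.le hc1 hε0 hε1 hr hrR
    have h3 := sq_mul_sub_inner_sq_le hν (hA y hy1) hX
    have hin : inner ℝ y ν ^ 2 ≤ r ^ 2 := by
      have := abs_real_inner_le_norm y ν
      rw [hν, mul_one] at this
      rw [← sq_abs]
      gcongr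
    have h4 := hcoef ρ ((r ^ 2 - inner ℝ y ν ^ 2) / r ^ 2) hρ0
      (div_nonneg (by linarith) ht.le) ((div_le_one ht).2 (by linarith [sq_nonneg (inner ℝ y ν)]))
      (by
        rw [hψr, ← hrdef] at h3
        calc _ = ((c * ρ + ρ ^ γ) / r) ^ 2 * (r ^ 2 - inner ℝ y ν ^ 2) := by field_simp
          _ ≤ _ := h3)
    have h5 := div_le_div_of_nonneg_right h4 hr.le
    have h6 : ((Module.finrank ℝ E : ℝ) + p - 2) * ψ ε (r ^ 2)
          + 2 * (-(c * ε * (r ^ 2)⁻¹ + (1 + γ) / 2 * (ε ^ γ * (r ^ 2) ^ (-((1 + γ) / 2)))) / r ^ 2)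
            * (r ^ 2 + (p - 2) * inner ℝ y ν ^ 2)
        = (c * ρ * (Module.finrank ℝ E - p + 2 * (p - 2) * ((r ^ 2 - inner ℝ y ν ^ 2) / r ^ 2))
        + ρ ^ γ * (Module.finrank ℝ E - 1 - γ * (p - 1)
          + (p - 2) * (1 + γ) * ((r ^ 2 - inner ℝ y ν ^ 2) / r ^ 2))) / r := by
      rw [hpow, hψr, show c * ε * (r ^ 2)⁻¹ = c * ρ / r by rw [hρ]; field_simp]
      field_simp
      ring
    have h7 := h6.symm ▸ h5
    linarith
  have hvb : ∀ ε, 0 < ε → ε ≤ 1 → φ x + Φ ε (‖x‖ ^ 2) ≤ v x := by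
    intro ε hε0 hε1
    have hlog : Tendsto (fun w : E => φ w + Φ ε (‖w‖ ^ 2)) (𝓝[≠] 0) atBot := by
      have h1 : Tendsto (fun w : E => ‖w‖ ^ 2) (𝓝[≠] 0) (𝓝[>] 0) := by
        refine tendsto_nhdsWithin_iff.2 ⟨?_, ?_⟩
        · have : Tendsto (fun w : E => ‖w‖ ^ 2) (𝓝 0) (𝓝 (‖(0 : E)‖ ^ 2)) :=
            (by fun_prop : Continuous fun w : E => ‖w‖ ^ 2).tendsto 0
          simpa using this.mono_left nhdsWithin_le_nhds
        · filter_upwards [self_mem_nhdsWithin] with w hw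
          have := norm_pos_iff.2 hw
          exact mem_Ioi.2 (by positivity)
      have h2 : Tendsto (Φ ε) (𝓝[>] 0) atBot := by
        refine Tendsto.atBot_add (C := ε ^ γ / (1 - γ) * (0 - (R ^ 2) ^ ((1 - γ) / 2))) ?_ ?_
        · refine Tendsto.const_mul_atBot (by positivity) ?_
          exact tendsto_atBot_add_const_right _ _ Real.tendsto_log_nhdsGT_zero
        · refine Tendsto.const_mul _ (Tendsto.sub_const ?_ _)
          have := (Real.continuousAt_rpow_const 0 ((1 - γ) / 2) (Or.inr (by linarith))).tendsto
          rw [Real.zero_rpow (by linarith)] at this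
          exact this.mono_left nhdsWithin_le_nhds
      have h3 : Tendsto φ (𝓝[≠] 0) (𝓝 (φ 0)) :=
        ((hasGradientAt_iff_hasFDerivAt.1 (hφ 0 (mem_ball_self hR₁))).continuousAt.tendsto).mono_left
          nhdsWithin_le_nhds
      exact h3.add_atBot (h2.comp h1)
    have hnear := (hlog.eventually_le_atBot B).and hB
    rw [eventually_nhdsWithin_iff, Metric.eventually_nhds_iff_ball] at hnear
    obtain ⟨δ, hδ, hnear⟩ := hnear
    have hx0 : 0 < ‖x‖ := norm_pos_iff.2 hx.2
    have hxR : ‖x‖ < R := by simpa using hx.1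
    set r₀ := min (δ / 2) (‖x‖ / 2) with hr₀
    have hr₀0 : 0 < r₀ := by positivity
    have hr₀δ : r₀ < δ := (min_le_left _ _).trans_lt (by linarith)
    have hr₀x : r₀ < ‖x‖ := (min_le_right _ _).trans_lt (by linarith)
    set Cc := closedBall (0 : E) R \ ball 0 r₀ with hCc
    set D := ball (0 : E) R \ closedBall 0 r₀ with hDdef
    have hDC : D ⊆ Cc := sdiff_subset_sdiff ball_subset_closedBall ball_subset_closedBall
    have hCr : ∀ z ∈ Cc, r₀ ≤ ‖z‖ := fun z hz => by simpa using hz.2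
    have hCR : ∀ z ∈ Cc, ‖z‖ ≤ R := fun z hz => by simpa using hz.1
    have hCreg : Cc ⊆ ball 0 (min R₁ R₂) \ {0} := fun z hz =>
      ⟨by simpa using (hCR z hz).trans_lt hRR, fun h => by
        have := hCr z hz
        rw [mem_singleton_iff.1 h, norm_zero] at this
        linarith⟩
    have hΦc : ∀ z ∈ Cc, ContinuousAt (fun w : E => φ w + Φ ε (‖w - 0‖ ^ 2)) z := by
      intro z hz
      have hz0 : 0 < ‖z - 0‖ ^ 2 := by
        have := hr₀0.trans_le (hCr z hz)
        rw [sub_zero]; positivity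
      refine ContinuousAt.add (hasGradientAt_iff_hasFDerivAt.1 (hφ z ?_)).continuousAt ?_
      · simpa using (hCR z hz).trans_lt hRR1
      · exact (hasDerivAt_barrier hγ1 hz0).continuousAt.comp (f := fun w : E => ‖w - 0‖ ^ 2)
          (by fun_prop)
    have := IsRegSol.le_of_isStrictSubAt hp.le (by linarith : 0 < s)
      (hv.mono (hDC.trans hCreg)) ((isCompact_closedBall _ _).diff isOpen_ball)
      (isOpen_ball.sdiff isClosed_closedBall) hDC (hv.continuousOn.mono hCreg)
      (fun z hz => (hΦc z hz).continuousWithinAt)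
      (fun z hz => hstrict ε hε0 hε1 z ⟨hz.1, fun h => (hCreg (hDC hz)).2 h⟩)
      (fun z hz => by
        by_cases hzr : ‖z‖ ≤ r₀
        · have := hnear z (by simpa using hzr.trans_lt hr₀δ) (hCreg hz.1).2
          simpa using this.1.trans this.2
        · have hzR : ‖z‖ = R := by
            refine le_antisymm (hCR z hz.1) (not_lt.1 fun h => hz.2 ⟨by simpa using h, ?_⟩)
            simpa using not_le.1 hzr
          simpa [hzR, hΦ] using hbd z (by simpa using hzR))
      x ⟨by simpa using hxR.le, by simpa using hr₀x.le⟩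
    simpa using this
  have hlim : Tendsto (fun ε => φ x + Φ ε (‖x‖ ^ 2)) (𝓝[>] 0) (𝓝 (φ x)) := by
    have h1 : ContinuousAt (fun ε => φ x + Φ ε (‖x‖ ^ 2)) 0 := by
      simp only [hΦ]
      have := Real.continuousAt_rpow_const 0 γ (Or.inr hγ0.le)
      fun_prop
    have h2 := h1.tendsto
    simp only [hΦ, Real.zero_rpow hγ0.ne'] at h2
    simpa [hΦ] using h2.mono_left nhdsWithin_le_nhds
  refine le_of_tendsto hlim ?_
  filter_upwards [Ioc_mem_nhdsGT (zero_lt_one' ℝ)] with ε hε using hvb ε hε.1 hε.2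

end Removability

section Scaling

variable {E : Type*} [NormedAddCommGroup E] [InnerProductSpace ℝ E] [FiniteDimensional ℝ E]

lemma gradient_const_mul (c : ℝ) (v : E → ℝ) :
    gradient (fun x => c * v x) = fun x => c • gradient v x := by
  ext1 x
  have : fderiv ℝ (fun x => c * v x) x = c • fderiv ℝ v x :=
    congrFun (fderiv_const_smul_field (𝕜 := ℝ) (f := v) c) x
  simp [gradient, this]

lemma IsRegSol.const_mul {p s σ : ℝ} {D : Set E} {v : E → ℝ} (h : IsRegSol p s σ D v) {c : ℝ}
    (hc : c ≠ 0) : IsRegSol p s (c * |c| ^ (-s) * σ) D (fun x => c * v x) := by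
  refine ⟨fun x hx => (h.differentiableAt x hx).const_mul c, fun x hx hne => ?_,
    fun x hx hne ν hν heq => ?_⟩
  · rw [gradient_const_mul] at hne ⊢
    exact (h.contDiffAt x hx (smul_ne_zero_iff.1 hne).2).const_smul c
  · rw [gradient_const_mul] at hne heq ⊢
    simp only at hne heq ⊢
    have hne' := (smul_ne_zero_iff.1 hne).2
    have hd := (h.contDiffAt x hx hne').differentiableAt one_ne_zero
    have hfd : fderiv ℝ (fun x => c • gradient v x) x = c • fderiv ℝ (gradient v) x :=
      fderiv_fun_const_smul hd c
    have hell : ellip p (fderiv ℝ (gradient v) x) ν = σ * ‖gradient v x‖ ^ s := by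
      rw [norm_smul, Real.norm_eq_abs] at heq
      rcases lt_or_gt_of_ne hc with hc | hc
      · have h1 : gradient v x = ‖gradient v x‖ • -ν := by
          rw [abs_of_neg hc] at heq
          have : c • gradient v x = c • (‖gradient v x‖ • -ν) := by
            rw [heq, smul_neg, smul_neg, smul_smul]; simp
          exact smul_right_injective E hc.ne this
        rw [← h.eq x hx hne' (-ν) (by rwa [norm_neg]) h1]
        simp [ellip]
      · have h1 : gradient v x = ‖gradient v x‖ • ν := by
          rw [abs_of_pos hc, mul_smul] at heq
          exact smul_right_injective E hc.ne' heq
        exact h.eq x hx hne' ν hν h1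
    rw [hfd, ellip_smul, hell, norm_smul, Real.norm_eq_abs,
      Real.mul_rpow (abs_nonneg c) (norm_nonneg _), Real.rpow_neg (abs_nonneg c)]
    have : 0 < |c| ^ s := Real.rpow_pos_of_pos (abs_pos.2 hc) s
    field_simp

lemma IsRegSol.neg {p s σ : ℝ} {D : Set E} {v : E → ℝ} (h : IsRegSol p s σ D v) :
    IsRegSol p s (-σ) D (fun x => -v x) := by
  simpa using h.const_mul (c := -1) (by norm_num)

end Scaling

section IsolatedSingularity

variable {E : Type*} [NormedAddCommGroup E] [InnerProductSpace ℝ E] [FiniteDimensional ℝ E]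

lemma continuous_trace : Continuous fun L : E →L[ℝ] E => LinearMap.trace ℝ E (L : E →ₗ[ℝ] E) :=
  (LinearMap.trace ℝ E ∘ₗ ContinuousLinearMap.coeLM ℝ).continuous_of_finiteDimensional

lemma exists_abs_ellip_le (p : ℝ) :
    ∃ K, 0 ≤ K ∧ ∀ (L : E →L[ℝ] E) (ν : E), ‖ν‖ = 1 → |ellip p L ν| ≤ K * ‖L‖ := by
  set T : (E →L[ℝ] E) →L[ℝ] ℝ :=
    LinearMap.toContinuousLinearMap (LinearMap.trace ℝ E ∘ₗ ContinuousLinearMap.coeLM ℝ)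
  refine ⟨‖T‖ + |p - 2|, by positivity, fun L ν hν => ?_⟩
  have h1 : |T L| ≤ ‖T‖ * ‖L‖ := T.le_opNorm L
  have h2 : |inner ℝ (L ν) ν| ≤ ‖L‖ := by
    refine (abs_real_inner_le_norm _ _).trans ?_
    simpa [hν] using L.le_opNorm ν
  calc |ellip p L ν| = |T L + (p - 2) * inner ℝ (L ν) ν| := rfl
    _ ≤ |T L| + |p - 2| * |inner ℝ (L ν) ν| := by rw [← abs_mul]; exact abs_add_le _ _
    _ ≤ ‖T‖ * ‖L‖ + |p - 2| * ‖L‖ := by gcongr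
    _ = _ := by ring

lemma exists_bound_of_strict {p s σ : ℝ} (hs : 0 ≤ s) {Y : E → E} {M : E → E →L[ℝ] E}
    (hY : ContinuousAt Y 0) (hM : ContinuousAt M 0) (h0 : Y 0 ≠ 0)
    (hstrict : σ * ‖Y 0‖ ^ s < ellip p (M 0) (‖Y 0‖⁻¹ • Y 0)) :
    ∃ C, 0 ≤ C ∧ ∀ᶠ y in 𝓝 (0 : E), ∀ X ν : E, ‖ν‖ = 1 → X = ‖X‖ • ν →
      σ * ‖X‖ ^ s - ellip p (M y) ν ≤ C * ‖X - Y y‖ ^ s := by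
  obtain ⟨K, hK, hell⟩ := exists_abs_ellip_le (E := E) p
  have hcont : ContinuousAt (fun z : E × E => σ * ‖z.2‖ ^ s - ellip p (M z.1) (‖z.2‖⁻¹ • z.2))
      (0, Y 0) := by
    have h1 : ContinuousAt (fun z : E × E => M z.1) (0, Y 0) :=
      ContinuousAt.comp (f := Prod.fst) (x := ((0 : E), Y 0)) hM continuousAt_fst
    have h2 : ContinuousAt (fun z : E × E => ‖z.2‖⁻¹ • z.2) (0, Y 0) :=
      (continuousAt_snd.norm.inv₀ (norm_ne_zero_iff.2 h0)).smul continuousAt_snd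
    have h3 : ContinuousAt (fun z : E × E => ‖z.2‖ ^ s) (0, Y 0) :=
      continuousAt_snd.norm.rpow_const (Or.inr hs)
    have h4 : ContinuousAt (fun z : E × E => LinearMap.trace ℝ E (M z.1 : E →ₗ[ℝ] E)) (0, Y 0) :=
      continuous_trace.continuousAt.comp h1
    exact (h3.const_mul σ).sub
      (h4.add ((ContinuousAt.inner (𝕜 := ℝ) (h1.clm_apply h2) h2).const_mul (p - 2)))
  have hneg : ∀ᶠ z in 𝓝 ((0 : E), Y 0), z.2 ≠ 0 ∧
      σ * ‖z.2‖ ^ s - ellip p (M z.1) (‖z.2‖⁻¹ • z.2) < 0 :=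
    (continuousAt_snd.eventually_ne h0).and
      (hcont.eventually_lt_const (by simp only; linarith))
  obtain ⟨δ, hδ, hneg⟩ := Metric.eventually_nhds_iff_ball.1 hneg
  set g := δ / 2 with hg
  have hg0 : 0 < g := by positivity
  set A := ‖Y 0‖ + g with hA
  set C₀ := K * (‖M 0‖ + 1) with hC₀
  have hC₀0 : 0 ≤ C₀ := by positivity
  refine ⟨|σ| * (A / g + 1) ^ s + C₀ / g ^ s, by positivity, ?_⟩
  have hYev : ∀ᶠ y in 𝓝 (0 : E), ‖Y y - Y 0‖ < g := by
    simpa [dist_eq_norm] using hY.eventually (ball_mem_nhds (Y 0) hg0)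
  have hMev : ∀ᶠ y in 𝓝 (0 : E), ‖M y‖ < ‖M 0‖ + 1 := hM.norm.eventually_lt_const (by linarith)
  filter_upwards [hYev, hMev, ball_mem_nhds (0 : E) hδ] with y hy1 hy2 hy3 X ν hν hX
  rcases lt_or_ge ‖X - Y y‖ g with hlt | hge
  · have hmem : (y, X) ∈ ball ((0 : E), Y 0) δ := by
      rw [← ball_prod_same]
      refine ⟨hy3, ?_⟩
      rw [mem_ball, dist_eq_norm]
      calc ‖X - Y 0‖ = ‖(X - Y y) + (Y y - Y 0)‖ := by rw [sub_add_sub_cancel]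
        _ ≤ _ := norm_add_le _ _
        _ < δ := by linarith
    obtain ⟨hX0, h1⟩ := hneg _ hmem
    simp only at hX0 h1
    have hνX : ‖X‖⁻¹ • X = ν := by
      nth_rw 2 [hX]
      rw [smul_smul, inv_mul_cancel₀ (norm_ne_zero_iff.2 hX0), one_smul]
    rw [hνX] at h1
    exact h1.le.trans (by positivity)
  · have hYA : ‖Y y‖ ≤ A := by
      have := norm_le_norm_add_norm_sub' (Y y) (Y 0)
      linarith
    have hXle : ‖X‖ ≤ (A / g + 1) * ‖X - Y y‖ := by
      have h1 : ‖X‖ ≤ ‖Y y‖ + ‖X - Y y‖ := norm_le_norm_add_norm_sub' X (Y y)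
      have h2 : A ≤ A / g * ‖X - Y y‖ := by
        rw [div_mul_eq_mul_div, le_div_iff₀ hg0]
        gcongr
      linarith
    have h1 : σ * ‖X‖ ^ s ≤ |σ| * (A / g + 1) ^ s * ‖X - Y y‖ ^ s := by
      calc σ * ‖X‖ ^ s ≤ |σ| * ‖X‖ ^ s := by gcongr; exact le_abs_self σ
        _ ≤ |σ| * ((A / g + 1) * ‖X - Y y‖) ^ s := by gcongr
        _ = _ := by rw [Real.mul_rpow (by positivity) (norm_nonneg _)]; ring
    have h2 : -ellip p (M y) ν ≤ C₀ / g ^ s * ‖X - Y y‖ ^ s := by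
      calc -ellip p (M y) ν ≤ K * ‖M y‖ := (neg_le_abs _).trans (hell _ _ hν)
        _ ≤ C₀ := mul_le_mul_of_nonneg_left hy2.le hK
        _ = C₀ / g ^ s * g ^ s := by field_simp
        _ ≤ _ := by gcongr
    calc _ ≤ |σ| * (A / g + 1) ^ s * ‖X - Y y‖ ^ s + C₀ / g ^ s * ‖X - Y y‖ ^ s := by linarith
      _ = _ := by ring

/-- The exponents for which isolated singularities of bounded solutions are removable. -/
structure IsSubcritical (n p s : ℝ) : Prop where
  two_le : 2 ≤ n
  one_lt : 1 < p
  le : p ≤ n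
  one_lt' : 1 < s
  exists_between : ∃ γ, s - 1 < γ ∧ γ < 1 ∧ γ < n + p - 3

lemma IsSubcritical.nontrivial {p s : ℝ} (h : IsSubcritical (Module.finrank ℝ E) p s) :
    Nontrivial E := by
  have := h.two_le
  have : 2 ≤ Module.finrank ℝ E := by exact_mod_cast this
  exact (Module.finrank_pos_iff (R := ℝ)).1 (by omega)

/-- A solution away from the origin, whose value at the origin is its lower limit there. -/
structure IsSingSol (p s σ : ℝ) (D : Set E) (v : E → ℝ) : Prop where
  regular : IsRegSol p s σ (D \ {0}) v
  lower : 0 ∈ D → ∀ η > 0, ∀ᶠ x in 𝓝[≠] (0 : E), v 0 - η < v x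
  frequently : 0 ∈ D → ∀ η > 0, ∃ᶠ x in 𝓝[≠] (0 : E), v x < v 0 + η

lemma IsSingSol.lowerSemicontinuousOn {p s σ : ℝ} {C D : Set E} {V : E → ℝ}
    (h : IsSingSol p s σ D V) (hC : ContinuousOn V (C \ {0})) (h0 : 0 ∈ C → 0 ∈ D) :
    LowerSemicontinuousOn V C := by
  intro x hx y hy
  by_cases hx0 : x = 0
  · subst hx0
    refine eventually_nhdsWithin_of_eventually_nhds ?_
    have := h.lower (h0 hx) (V 0 - y) (by linarith)
    rw [eventually_nhdsWithin_iff] at this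
    filter_upwards [this] with z hz
    by_cases hz0 : z = 0
    · rwa [hz0]
    · simpa using hz hz0
  · have h1 : ContinuousWithinAt V C x := (hC x ⟨hx, hx0⟩).mono_of_mem_nhdsWithin
      (inter_mem self_mem_nhdsWithin
        (mem_nhdsWithin_of_mem_nhds (isOpen_compl_singleton.mem_nhds hx0)))
    exact h1.eventually_const_lt hy

/-- A smooth strict subsolution with nonzero gradient cannot touch from below at the singularity. -/
theorem IsSingSol.not_isLocalMax_sub {p s σ : ℝ} (hpar : IsSubcritical (Module.finrank ℝ E) p s)
    {D : Set E} (hD : IsOpen D) (h0 : (0 : E) ∈ D) {V : E → ℝ} (hV : IsSingSol p s σ D V)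
    {φ : E → ℝ} {Y : E → E} {M : E → E →L[ℝ] E}
    (hφ : ∀ᶠ y in 𝓝 (0 : E), HasGradientAt φ (Y y) y)
    (hY : ∀ᶠ y in 𝓝 (0 : E), HasFDerivAt Y (M y) y)
    (hM : ContinuousAt M 0) (hY0 : Y 0 ≠ 0)
    (hstrict : σ * ‖Y 0‖ ^ s < ellip p (M 0) (‖Y 0‖⁻¹ • Y 0)) :
    ¬ IsLocalMax (fun x => φ x - V x) 0 := by
  intro hmax
  have := hpar.nontrivial
  obtain ⟨γ, hγs, hγ1, hγ2⟩ := hpar.exists_between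
  have hs := hpar.one_lt'
  set n : ℝ := (Module.finrank ℝ E : ℝ) with hn
  obtain ⟨κ, hκ, hκlt⟩ : ∃ κ > 0, 2 * κ * (n + p - 2)
      < ellip p (M 0) (‖Y 0‖⁻¹ • Y 0) - σ * ‖Y 0‖ ^ s := by
    have hb : 0 < n + p - 2 := by linarith [hpar.two_le, hpar.one_lt]
    refine ⟨(ellip p (M 0) (‖Y 0‖⁻¹ • Y 0) - σ * ‖Y 0‖ ^ s) / (4 * (n + p - 2)),
      div_pos (by linarith) (by linarith), ?_⟩
    rw [show 2 * ((ellip p (M 0) (‖Y 0‖⁻¹ • Y 0) - σ * ‖Y 0‖ ^ s) / (4 * (n + p - 2))) * (n + p - 2)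
      = (ellip p (M 0) (‖Y 0‖⁻¹ • Y 0) - σ * ‖Y 0‖ ^ s) / 2 by field_simp; ring]
    linarith
  set Y' : E → E := fun y => Y y - (2 * κ) • y with hY'
  set M' : E → E →L[ℝ] E := fun y => M y - (2 * κ) • ContinuousLinearMap.id ℝ E with hM'
  have hY'0 : Y' 0 = Y 0 := by simp [hY']
  have hfY : ∀ᶠ y in 𝓝 (0 : E), HasFDerivAt Y' (M' y) y := by
    filter_upwards [hY] with y hy
    exact hy.sub ((hasFDerivAt_id y).const_smul (2 * κ))
  have hgφ : ∀ k, ∀ y, HasGradientAt φ (Y y) y →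
      HasGradientAt (fun x => φ x - κ * ‖x‖ ^ 2 + k) (Y' y) y := by
    intro k y hy
    rw [hasGradientAt_iff_hasFDerivAt] at hy ⊢
    have h1 := ((hy.sub ((hasFDerivAt_norm_sub_sq y 0).const_mul κ)).add_const k)
    simp only [sub_zero] at h1
    refine h1.congr_fderiv ?_
    ext w
    simp only [hY', sub_apply, smul_apply, innerSL_apply_apply, smul_eq_mul, map_sub, map_smul,
      InnerProductSpace.toDual_apply_apply]
    ring
  have hstrict' : σ * ‖Y' 0‖ ^ s < ellip p (M' 0) (‖Y' 0‖⁻¹ • Y' 0) := by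
    have h1 : ellip p (ContinuousLinearMap.id ℝ E) (‖Y 0‖⁻¹ • Y 0) = n + p - 2 := by
      rw [ellip, ContinuousLinearMap.id_apply, real_inner_self_eq_norm_sq, norm_normalize hY0]
      simp [hn]
      ring
    rw [hY'0, hM', ellip_sub, ellip_smul, h1]
    linarith
  obtain ⟨C, hC, hkey⟩ := exists_bound_of_strict (by linarith) hfY.self_of_nhds.continuousAt
    (hM.sub continuousAt_const) (by rwa [hY'0]) hstrict'
  have hYbd : ∀ᶠ y in 𝓝 (0 : E), ‖Y' y‖ < ‖Y' 0‖ + 1 :=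
    hfY.self_of_nhds.continuousAt.norm.eventually_lt_const (by linarith)
  obtain ⟨R₁, hR₁, hball⟩ := Metric.eventually_nhds_iff_ball.1
    (hφ.and (hfY.and (hkey.and (hYbd.and (hmax.and (hD.mem_nhds h0))))))
  obtain ⟨R₀, hR₀, hR₀₁, hrem⟩ := IsRegSol.le_of_le_sphere (σ := σ) hpar.two_le hpar.one_lt hpar.le
    hs hγs hγ1 hγ2 hR₁ (fun y hy => (hball y hy).2.1)
    (fun y hy => (hball y hy).2.2.2.1.le) hC (fun y hy => (hball y hy).2.2.1)
  set R := R₀ / 2 with hR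
  have hR0 : 0 < R := by positivity
  have hsub : ball (0 : E) R₀ ⊆ ball 0 R₁ := ball_subset_ball hR₀₁
  have hle := hrem R hR0 (by linarith) (fun x => φ x - κ * ‖x‖ ^ 2 + (V 0 - φ 0 + κ * R ^ 2)) V
    (fun y hy => hgφ _ y (hball y hy).1)
    (hV.regular.mono (sdiff_subset_sdiff_left fun y hy => (hball y (hsub hy)).2.2.2.2.2))
    ⟨V 0 - 1, (hV.lower h0 1 one_pos).mono fun _ h => h.le⟩ (fun x hx => by
      have hx' : ‖x‖ = R := by simpa using hx
      have := (hball x (hsub (by simp [hx']; linarith))).2.2.2.2.1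
      simp only at this
      rw [hx']
      linarith)
  have hlow : ∀ᶠ x in 𝓝[≠] (0 : E), V 0 + κ * R ^ 2 / 2 < V x := by
    have hc : ContinuousAt (fun x => φ x - κ * ‖x‖ ^ 2 + (V 0 - φ 0 + κ * R ^ 2)) 0 :=
      (hasGradientAt_iff_hasFDerivAt.1 (hgφ _ 0 hφ.self_of_nhds)).continuousAt
    have h1 := hc.eventually_const_lt (u := V 0 + κ * R ^ 2 / 2)
      (by
        have : 0 < κ * R ^ 2 := by positivity
        simp; linarith)
    filter_upwards [eventually_nhdsWithin_of_eventually_nhds h1, self_mem_nhdsWithin,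
      mem_nhdsWithin_of_mem_nhds (ball_mem_nhds (0 : E) hR0)] with x hx1 hx2 hx3
    exact hx1.trans_le (hle x ⟨hx3, hx2⟩)
  obtain ⟨x, hx1, hx2⟩ := ((hV.frequently h0 (κ * R ^ 2 / 2) (by positivity)).and_eventually
    hlow).exists
  linarith

/-- Strong minimum principle, up to the singularity. -/
theorem IsSingSol.eventually_eq_of_isLocalMin {p s σ : ℝ}
    (hpar : IsSubcritical (Module.finrank ℝ E) p s)
    {D : Set E} (hD : IsOpen D) {V : E → ℝ} (hV : IsSingSol p s σ D V) {x₀ : E} (hx₀ : x₀ ∈ D)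
    (hmin : IsLocalMin V x₀) : ∀ᶠ y in 𝓝 x₀, V y = V x₀ := by
  have := hpar.nontrivial
  have hs := hpar.one_lt'
  have hD' : IsOpen (D \ {0}) := hD.sdiff isClosed_singleton
  by_cases hx : x₀ = 0
  swap
  · exact hV.regular.eventually_eq_of_isLocalMin hpar.one_lt hs hD' ⟨hx₀, hx⟩ hmin
  subst hx
  obtain ⟨γ, hγs, hγ1, hγ2⟩ := hpar.exists_between
  obtain ⟨R₁, hR₁, hball⟩ := Metric.eventually_nhds_iff_ball.1
    ((show ∀ᶠ y in 𝓝 (0 : E), y ∈ D from hD.mem_nhds hx₀).and hmin)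
  obtain ⟨R₀, hR₀, hR₀₁, hrem⟩ := IsRegSol.le_of_le_sphere (σ := σ) (Y := fun _ : E => (0 : E))
    (M := fun _ => 0) (A := 0) (C := |σ|) hpar.two_le hpar.one_lt hpar.le
    hs hγs hγ1 hγ2 hR₁ (fun y _ => hasFDerivAt_const _ _) (fun y _ => by simp) (abs_nonneg σ)
    (fun y _ X ν _ _ => by
      have : ellip p (0 : E →L[ℝ] E) ν = 0 := by simp [ellip]
      rw [this, sub_zero, sub_zero]
      gcongr
      exact le_abs_self σ)
  have hsub : ball (0 : E) R₀ ⊆ ball 0 R₁ := ball_subset_ball hR₀₁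
  have hreg : IsRegSol p s σ (ball 0 R₀ \ {0}) V :=
    hV.regular.mono (sdiff_subset_sdiff_left fun y hy => (hball y (hsub hy)).1)
  have hconst : ∀ x ∈ ball (0 : E) R₀, V x = V 0 := by
    intro x hx
    by_cases hx0 : x = 0
    · rw [hx0]
    set R := ‖x‖ with hR
    have hRpos : 0 < R := norm_pos_iff.2 hx0
    have hRR : R < R₀ := by simpa using hx
    have hsph : sphere (0 : E) R ⊆ ball 0 R₀ \ {0} := fun z hz =>
      ⟨sphere_subset_ball hRR hz, fun h => by
        rw [mem_singleton_iff.1 h, mem_sphere, dist_self] at hz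
        linarith⟩
    have hex : ∃ z ∈ sphere (0 : E) R, V z = V 0 := by
      by_contra! hne
      obtain ⟨z, hz, hzmin⟩ := (isCompact_sphere (0 : E) R).exists_isMinOn
        (NormedSpace.sphere_nonempty.2 hRpos.le) (hreg.continuousOn.mono hsph)
      have hzlt : V 0 < V z := lt_of_le_of_ne (hball z (hsub (hsph hz).1)).2 (hne z hz).symm
      have h1 := hrem R hRpos hRR (fun _ => V z) V (fun y _ => hasGradientAt_const y (V z)) hreg
        ⟨V 0 - 1, (hV.lower hx₀ 1 one_pos).mono fun _ h => h.le⟩ (fun w hw => hzmin hw)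
      obtain ⟨w, hw1, hw2, hw3⟩ := ((hV.frequently hx₀ (V z - V 0) (by linarith)).and_eventually
        (inter_mem (mem_nhdsWithin_of_mem_nhds (ball_mem_nhds (0 : E) hRpos))
          self_mem_nhdsWithin)).exists
      have := h1 w ⟨hw2, hw3⟩
      linarith
    obtain ⟨z, hz, hzV⟩ := hex
    have hrank : 1 < Module.rank ℝ E := by
      rw [← Module.finrank_eq_rank]
      have : 2 ≤ Module.finrank ℝ E := by exact_mod_cast hpar.two_le
      exact_mod_cast (by omega : 1 < Module.finrank ℝ E)
    have hloc : ∀ w ∈ sphere (0 : E) R, V w = V 0 → w ∈ interior {y | V y = V 0} := by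
      intro w hw hwV
      have hwb := hsph hw
      have hwmin : IsLocalMin V w := by
        filter_upwards [isOpen_ball.mem_nhds hwb.1] with y hy
        rw [hwV]
        exact (hball y (hsub hy)).2
      rw [mem_interior_iff_mem_nhds]
      have := hreg.eventually_eq_of_isLocalMin hpar.one_lt hs
        (isOpen_ball.sdiff isClosed_singleton) hwb hwmin
      rwa [hwV] at this
    have hopen : IsOpen ((ball (0 : E) R₀ \ {0}) ∩ V ⁻¹' {V 0}ᶜ) :=
      hreg.continuousOn.isOpen_inter_preimage (isOpen_ball.sdiff isClosed_singleton)
        isOpen_compl_singleton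
    have := (isPreconnected_sphere hrank (0 : E) R).subset_left_of_subset_union isOpen_interior
      hopen (Set.disjoint_left.2 fun w hw1 hw2 => hw2.2
        (interior_subset (s := {y | V y = V 0}) hw1))
      (fun w hw => by
        by_cases hwV : V w = V 0
        · exact Or.inl (hloc w hw hwV)
        · exact Or.inr ⟨hsph hw, hwV⟩) ⟨z, hz, hloc z hz hzV⟩
    exact interior_subset (s := {y | V y = V 0}) (this (by simp [hR]))
  exact Filter.mem_of_superset (ball_mem_nhds 0 hR₀) hconst

lemma IsSingSol.hasFDerivAt_zero_of_contact {p s σ τ : ℝ}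
    (hpar : IsSubcritical (Module.finrank ℝ E) p s) (hστ : σ < τ) {D : Set E} (hD : IsOpen D)
    {U V : E → ℝ} (hU : IsRegSol p s τ (D \ {0}) U) (hV : IsSingSol p s σ D V) {a b : E}
    (ha : a ∈ D) (ha0 : a ≠ 0) (hb : b ∈ D)
    (hmax : IsLocalMax (fun ζ => U (a + ζ) - V (b + ζ)) 0) :
    HasFDerivAt U (0 : E →L[ℝ] ℝ) a := by
  have hD' : IsOpen (D \ {0}) := hD.sdiff isClosed_singleton
  have haD : a ∈ D \ {0} := ⟨ha, ha0⟩
  have hgrad : ∀ᶠ y in 𝓝 a, HasGradientAt U (gradient U y) y :=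
    Filter.mem_of_superset (hD'.mem_nhds haD) fun y hy =>
      (hU.differentiableAt y hy).hasGradientAt
  by_cases hX : gradient U a = 0
  · have := hasGradientAt_iff_hasFDerivAt.1 hgrad.self_of_nhds
    simpa [hX] using this
  exfalso
  have hC1 := hU.contDiffAt a haD hX
  have hfd : ∀ᶠ y in 𝓝 a, HasFDerivAt (gradient U) (fderiv ℝ (gradient U) y) y := by
    filter_upwards [hC1.eventually (by simp)] with y hy
    exact (hy.differentiableAt one_ne_zero).hasFDerivAt
  have hfdc : ContinuousAt (fderiv ℝ (gradient U)) a :=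
    (hC1.fderiv_right (m := 0) (by simp)).continuousAt
  have hpos : 0 < ‖gradient U a‖ ^ s := Real.rpow_pos_of_pos (norm_pos_iff.2 hX) s
  have hstrict : ∀ ν : E, ‖ν‖ = 1 → gradient U a = ‖gradient U a‖ • ν →
      σ * ‖gradient U a‖ ^ s < ellip p (fderiv ℝ (gradient U) a) ν := fun ν hν h => by
    rw [hU.eq a haD hX ν hν h]
    gcongr
  by_cases hb0 : b = 0
  · subst hb0
    have htend : Tendsto (fun ζ : E => a + ζ) (𝓝 0) (𝓝 a) := by
      simpa using (by fun_prop : Continuous fun ζ : E => a + ζ).tendsto 0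
    have hcont : ContinuousAt (fun ζ : E => a + ζ) 0 := by fun_prop
    refine hV.not_isLocalMax_sub hpar hD hb (φ := fun ζ => U (a + ζ))
      (Y := fun ζ => gradient U (a + ζ)) (M := fun ζ => fderiv ℝ (gradient U) (a + ζ))
      ?_ ?_ ?_ ?_ ?_ (by simpa using hmax)
    · filter_upwards [htend.eventually hgrad] with y hy
      rw [hasGradientAt_iff_hasFDerivAt] at hy ⊢
      exact (hasFDerivAt_comp_add_left a).2 hy
    · filter_upwards [htend.eventually hfd] with y hy
      exact (hasFDerivAt_comp_add_left a).2 hy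
    · exact ContinuousAt.comp (g := fderiv ℝ (gradient U)) (by simpa using hfdc) hcont
    · simpa using hX
    · simpa using hstrict _ (norm_normalize hX) (norm_smul_normalize hX)
  · exact hX (IsStrictSubAt.eq_zero_of_contact hpar.one_lt.le hD' hV.regular ⟨hb, hb0⟩
      ⟨hgrad, _, hfd.self_of_nhds, hstrict⟩ hmax)

/-- If `U` solves the equation with a larger right-hand side than `V`, the difference `U - V`
cannot have a compact set of interior maximum points. -/
theorem IsSingSol.not_isMaxOn {p s σ τ : ℝ} (hpar : IsSubcritical (Module.finrank ℝ E) p s)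
    (hστ : σ < τ) {D K : Set E} (hD : IsOpen D) {U V : E → ℝ} {m : ℝ}
    (hU : IsSingSol p s (-τ) D (fun x => -U x)) (hV : IsSingSol p s σ D V) (hK : IsCompact K)
    (hKD : K ⊆ D) (hKne : K.Nonempty) (hKm : ∀ x ∈ K, U x - V x = m)
    (hlt : ∀ x ∈ D \ K, U x - V x < m) : False := by
  have := hpar.nontrivial
  have hUreg : IsRegSol p s τ (D \ {0}) U := by simpa using hU.regular.neg
  have hUusc : UpperSemicontinuousOn U D := fun x hx y hy => by
    have := hU.lowerSemicontinuousOn hU.regular.continuousOn id x hx (-y) (neg_lt_neg hy)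
    simpa using this
  have hext := isLocalMax_and_isLocalMin_of_contact hD hUusc
    (hV.lowerSemicontinuousOn hV.regular.continuousOn id) hK hKD hKm hlt
    (fun a ha b hb hab hmax => by
      by_cases ha0 : a = 0
      · right
        have h1 := hU.hasFDerivAt_zero_of_contact hpar (neg_lt_neg hστ) hD hV.regular.neg hb
          (fun h => hab (ha0.trans h.symm)) ha
          (by
            refine hmax.congr (Eventually.of_forall fun ζ => ?_)
            simp only; ring)
        simpa [Pi.neg_def] using h1.neg
      · exact Or.inl (hV.hasFDerivAt_zero_of_contact hpar hστ hD hUreg ha ha0 hb hmax))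
  have hopen : IsOpen K := by
    rw [isOpen_iff_mem_nhds]
    intro x hx
    have h1 := hU.eventually_eq_of_isLocalMin hpar hD (hKD hx) (hext x hx).1.neg
    have h2 := hV.eventually_eq_of_isLocalMin hpar hD (hKD hx) (hext x hx).2
    filter_upwards [h1, h2, hD.mem_nhds (hKD hx)] with y hy1 hy2 hy3
    by_contra hyK
    have := hlt y ⟨hy3, hyK⟩
    have := hKm x hx
    linarith
  have huniv : K = univ := IsClopen.eq_univ ⟨hK.isClosed, hopen⟩ hKne
  have : NoncompactSpace E := NormedSpace.noncompactSpace ℝ E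
  exact noncompact_univ E (huniv ▸ hK)

end IsolatedSingularity

section Bounded

variable {E : Type*} [NormedAddCommGroup E] [InnerProductSpace ℝ E] [FiniteDimensional ℝ E]

/-- A subsolution that is negligible with respect to the fundamental solution is bounded above
near the singularity. Here `v` is the opposite of the subsolution. -/
theorem IsRegSol.neg_le_of_isLittleO [Nontrivial E] {p s k R R₁ m : ℝ} (hp : 1 ≤ p) (hs : 0 < s)
    (hk : 2 * (p - 1) * k = Module.finrank ℝ E + p - 2) {v : E → ℝ} {Φ : ℝ → ℝ}
    (hv : IsRegSol p s (-1) (ball 0 R₁ \ {0}) v) (hRR : R < R₁)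
    (hΦ : ∀ t, 0 < t → HasDerivAt Φ (-(t ^ (-k)) / 2) t) (hΦR : 0 ≤ Φ (R ^ 2)) (hm : 0 ≤ m)
    (hsmall : ∀ ε > 0, ∀ᶠ x in 𝓝[≠] (0 : E), -(ε * Φ (‖x‖ ^ 2)) ≤ v x)
    (hbd : ∀ x ∈ sphere (0 : E) R, -m ≤ v x) : ∀ x ∈ ball (0 : E) R \ {0}, -m ≤ v x := by
  intro x hx
  have hx0 : 0 < ‖x‖ := norm_pos_iff.2 hx.2
  have hxR : ‖x‖ < R := by simpa using hx.1
  have hstrict : ∀ ε > 0, ∀ y : E, y ≠ 0 → IsStrictSubAt p s (-1)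
      (fun w => -m - ε * Φ (‖w - 0‖ ^ 2))
      (fun w => (ε * (‖w - 0‖ ^ 2) ^ (-k)) • (w - 0)) y := by
    intro ε hε y hy
    have hr : 0 < ‖y - 0‖ := by rw [sub_zero]; exact norm_pos_iff.2 hy
    have ht : 0 < ‖y - 0‖ ^ 2 := by positivity
    refine isStrictSubAt_radial (Φ := fun t => -m - ε * Φ t) (ψ := fun t => ε * t ^ (-k))
      (ψ' := ε * (-k * (‖y - 0‖ ^ 2) ^ (-k - 1))) (by positivity) ?_ ?_ ?_
    · filter_upwards [Ioi_mem_nhds ht] with t ht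
      refine (((hΦ t ht).const_mul ε).const_sub (-m)).congr_deriv ?_
      ring
    · exact (Real.hasDerivAt_rpow_const (Or.inl ht.ne')).const_mul ε
    · have h1 : 0 < (|ε * (‖y - 0‖ ^ 2) ^ (-k)| * ‖y - 0‖) ^ s := by positivity
      have h2 : ((Module.finrank ℝ E : ℝ) + p - 2) * (ε * (‖y - 0‖ ^ 2) ^ (-k))
          + 2 * (p - 1) * (ε * (-k * (‖y - 0‖ ^ 2) ^ (-k - 1))) * ‖y - 0‖ ^ 2 = 0 := by
        rw [← hk, Real.rpow_sub_one ht.ne']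
        field_simp
        ring
      rw [h2]
      linarith
  have hle : ∀ ε > 0, -m - ε * Φ (‖x‖ ^ 2) ≤ v x := by
    intro ε hε
    have hnear := hsmall ε hε
    rw [eventually_nhdsWithin_iff, Metric.eventually_nhds_iff_ball] at hnear
    obtain ⟨δ, hδ, hnear⟩ := hnear
    set r₀ := min (δ / 2) (‖x‖ / 2) with hr₀
    have hr₀0 : 0 < r₀ := by positivity
    have hr₀δ : r₀ < δ := (min_le_left _ _).trans_lt (by linarith)
    have hr₀x : r₀ < ‖x‖ := (min_le_right _ _).trans_lt (by linarith)
    set C := closedBall (0 : E) R \ ball 0 r₀ with hC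
    set D := ball (0 : E) R \ closedBall 0 r₀ with hDdef
    have hDC : D ⊆ C := sdiff_subset_sdiff ball_subset_closedBall ball_subset_closedBall
    have hCr : ∀ z ∈ C, r₀ ≤ ‖z‖ := fun z hz => by simpa using hz.2
    have hCR : ∀ z ∈ C, ‖z‖ ≤ R := fun z hz => by simpa using hz.1
    have hCreg : C ⊆ ball 0 R₁ \ {0} := fun z hz =>
      ⟨by simpa using (hCR z hz).trans_lt hRR, fun h => by
        have := hCr z hz
        rw [mem_singleton_iff.1 h, norm_zero] at this
        linarith⟩
    have := IsRegSol.le_of_isStrictSubAt hp hs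
      (hv.mono (hDC.trans hCreg)) ((isCompact_closedBall _ _).diff isOpen_ball)
      (isOpen_ball.sdiff isClosed_closedBall) hDC (hv.continuousOn.mono hCreg)
      (fun z hz => (hasGradientAt_iff_hasFDerivAt.1
        (hstrict ε hε z (hCreg hz).2).1.self_of_nhds).continuousAt.continuousWithinAt)
      (fun z hz => hstrict ε hε z (hCreg (hDC hz)).2)
      (fun z hz => by
        by_cases hzr : ‖z‖ ≤ r₀
        · have := hnear z (by simpa using hzr.trans_lt hr₀δ) (hCreg hz.1).2
          simp only [sub_zero]
          linarith
        · have hzR : ‖z‖ = R := by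
            refine le_antisymm (hCR z hz.1) (not_lt.1 fun h => hz.2 ⟨by simpa using h, ?_⟩)
            simpa using not_le.1 hzr
          have h1 := hbd z (by simpa using hzR)
          have h2 := mul_nonneg hε.le hΦR
          simp only [sub_zero, hzR]
          linarith)
      x ⟨by simpa using hxR.le, by simpa using hr₀x.le⟩
    simpa using this
  have hlim : Tendsto (fun ε => -m - ε * Φ (‖x‖ ^ 2)) (𝓝[>] 0) (𝓝 (-m)) := by
    have h1 : Continuous fun ε : ℝ => -m - ε * Φ (‖x‖ ^ 2) := by fun_prop
    simpa using (h1.tendsto 0).mono_left nhdsWithin_le_nhds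
  exact le_of_tendsto hlim (eventually_mem_nhdsWithin.mono fun ε hε => hle ε hε)

end Bounded

section Gradient

variable {E : Type*} [NormedAddCommGroup E] [InnerProductSpace ℝ E] [FiniteDimensional ℝ E]

lemma gradient_eq_sum (u : E → ℝ) :
    gradient u = fun x => ∑ i, fderiv ℝ u x (stdOrthonormalBasis ℝ E i) •
      stdOrthonormalBasis ℝ E i := by
  ext1 x
  rw [← (stdOrthonormalBasis ℝ E).sum_repr' (gradient u x)]
  refine Finset.sum_congr rfl fun i _ => ?_
  rw [real_inner_comm, gradient, InnerProductSpace.toDual_symm_apply]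

lemma ContDiffAt.gradient {u : E → ℝ} {x : E} {m n : WithTop ℕ∞} (h : ContDiffAt ℝ n u x)
    (hmn : m + 1 ≤ n) : ContDiffAt ℝ m (gradient u) x := by
  rw [gradient_eq_sum]
  exact ContDiffAt.sum fun i _ =>
    ((h.fderiv_right hmn).clm_apply contDiffAt_const).smul contDiffAt_const

/-- The trace of the derivative of `|Y|^{p-2} Y`. -/
lemma trace_fderiv_norm_rpow_smul {p : ℝ} {Y : E → E} {M : E →L[ℝ] E} {x ν : E}
    (hY : HasFDerivAt Y M x) (h0 : Y x ≠ 0) (hν : ‖ν‖ = 1) (hx : Y x = ‖Y x‖ • ν) :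
    LinearMap.trace ℝ E (fderiv ℝ (fun y => ‖Y y‖ ^ (p - 2) • Y y) x : E →ₗ[ℝ] E)
      = ‖Y x‖ ^ (p - 2) * ellip p M ν := by
  have hpos : 0 < ‖Y x‖ := norm_pos_iff.2 h0
  have heq : ∀ y, ‖Y y‖ ^ (p - 2) = (‖Y y‖ ^ 2) ^ ((p - 2) / 2) := fun y => by
    rw [← Real.rpow_natCast, ← Real.rpow_mul (norm_nonneg _)]
    congr 1
    push_cast
    ring
  have h1 := (hY.norm_sq.rpow_const (p := (p - 2) / 2) (Or.inl (by positivity))).smul hY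
  simp only [heq]
  have h2 : fderiv ℝ (fun y => (‖Y y‖ ^ 2) ^ ((p - 2) / 2) • Y y) x = _ := h1.fderiv
  rw [h2]
  set c := (p - 2) / 2 * (‖Y x‖ ^ 2) ^ ((p - 2) / 2 - 1) with hc
  have htr : ∀ l : E →L[ℝ] ℝ, LinearMap.trace ℝ E (l.smulRight (Y x) : E →ₗ[ℝ] E) = l (Y x) := by
    intro l
    rw [LinearMap.trace_eq_sum_inner _ (stdOrthonormalBasis ℝ E)]
    conv_rhs => rw [← (stdOrthonormalBasis ℝ E).sum_repr' (Y x), map_sum]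
    simp [inner_smul_right, mul_comm]
  rw [ContinuousLinearMap.toLinearMap_add, map_add, htr]
  have hin : inner ℝ (Y x) (M (Y x)) = ‖Y x‖ ^ 2 * inner ℝ (M ν) ν := by
    rw [real_inner_comm, hx, map_smul, inner_smul_left, inner_smul_right, norm_smul, hν]
    simp
    ring
  rw [Real.rpow_sub_one (by positivity)] at hc
  simp only [ContinuousLinearMap.toLinearMap_smul, map_smul, smul_eq_mul, smul_apply,
    ContinuousLinearMap.comp_apply, innerSL_apply_apply, hin, hc, ellip]
  simp
  field_simp
end Gradient

lemma IsStrongSolution.isRegSol {N : ℕ} {p q : ℝ} {G : Set (EuclideanSpace ℝ (Fin N))}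
    {u : EuclideanSpace ℝ (Fin N) → ℝ} (hG : IsOpen G) (h : IsStrongSolution p q G u) :
    IsRegSol p (q - p + 2) 1 G u := by
  obtain ⟨h1, h3, heq⟩ := h
  have hC : ∀ x ∈ G, gradient u x ≠ 0 → ContDiffAt ℝ 1 (gradient u) x := by
    intro x hx hne
    have hcont : ContinuousAt (gradient u) x :=
      ((h1.contDiffAt (hG.mem_nhds hx)).gradient (m := 0) (by simp)).continuousAt
    have hmem : {x | x ∈ G ∧ gradient u x ≠ 0} ∈ 𝓝 x :=
      (show ∀ᶠ y in 𝓝 x, y ∈ G from hG.mem_nhds hx).and (hcont.eventually_ne hne)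
    exact (h3.contDiffAt hmem).gradient (by norm_num)
  refine ⟨fun x hx => (h1.contDiffAt (hG.mem_nhds hx)).differentiableAt one_ne_zero, hC,
    fun x hx hne ν hν hxν => ?_⟩
  have htr := trace_fderiv_norm_rpow_smul (p := p)
    ((hC x hx hne).differentiableAt one_ne_zero).hasFDerivAt hne hν hxν
  have hpos : 0 < ‖gradient u x‖ := norm_pos_iff.2 hne
  have h4 := (heq x hx).2
  have h5 : ‖gradient u x‖ ^ (p - 2) * ellip p (fderiv ℝ (gradient u) x) ν
      = ‖gradient u x‖ ^ q := by rw [← htr, ← h4]; rfl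
  have h6 : ‖gradient u x‖ ^ q = ‖gradient u x‖ ^ (p - 2) * ‖gradient u x‖ ^ (q - p + 2) := by
    rw [← Real.rpow_add hpos]; congr 1; ring
  rw [h6] at h5
  rw [one_mul]
  exact mul_left_cancel₀ (Real.rpow_pos_of_pos hpos _).ne' h5

section SingularComparison

variable {E : Type*} [NormedAddCommGroup E] [InnerProductSpace ℝ E] [FiniteDimensional ℝ E]

lemma IsRegSol.congr {p s σ : ℝ} {D : Set E} {v w : E → ℝ} (h : IsRegSol p s σ D v)
    (hD : IsOpen D) (heq : EqOn w v D) : IsRegSol p s σ D w := by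
  have hev : ∀ x ∈ D, w =ᶠ[𝓝 x] v := fun x hx => heq.eventuallyEq_of_mem (hD.mem_nhds hx)
  have hgr : ∀ x ∈ D, gradient w x = gradient v x := fun x hx => by
    rw [gradient, gradient, (hev x hx).fderiv_eq]
  have hgev : ∀ x ∈ D, gradient w =ᶠ[𝓝 x] gradient v := fun x hx =>
    (show EqOn (gradient w) (gradient v) D from hgr).eventuallyEq_of_mem (hD.mem_nhds hx)
  refine ⟨fun x hx => (hev x hx).differentiableAt_iff.2 (h.differentiableAt x hx),
    fun x hx hne => ?_, fun x hx hne ν hν hxν => ?_⟩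
  · rw [hgr x hx] at hne
    exact (h.contDiffAt x hx hne).congr_of_eventuallyEq (hgev x hx)
  · rw [hgr x hx] at hne hxν ⊢
    rw [(hgev x hx).fderiv_eq]
    exact h.eq x hx hne ν hν hxν

/-- Comparison on a bounded open set, up to an isolated singularity. -/
theorem IsSingSol.le_of_le_boundary {p s σ τ : ℝ}
    (hpar : IsSubcritical (Module.finrank ℝ E) p s) (hστ : σ < τ) {C D : Set E} (hC : IsCompact C)
    (hD : IsOpen D) (hDC : D ⊆ C) (h0 : 0 ∈ C → 0 ∈ D) {U V : E → ℝ}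
    (hU : IsSingSol p s (-τ) D (fun x => -U x)) (hV : IsSingSol p s σ D V)
    (hUc : ContinuousOn U (C \ {0})) (hVc : ContinuousOn V (C \ {0}))
    (hbd : ∀ x ∈ C \ D, U x ≤ V x) : ∀ x ∈ C, U x ≤ V x := by
  by_contra! hex
  obtain ⟨x₀, hx₀, hlt⟩ := hex
  have husc : UpperSemicontinuousOn (fun x => U x - V x) C := by
    have h1 := (hU.lowerSemicontinuousOn hUc.neg h0).add
      (hV.lowerSemicontinuousOn hVc h0)
    intro x hx y hy
    filter_upwards [h1 x hx (-y) (by linarith)] with z hz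
    linarith
  obtain ⟨x₁, hx₁, hmax⟩ := husc.exists_isMaxOn ⟨x₀, hx₀⟩ hC
  have hm : 0 < U x₁ - V x₁ := by
    have : U x₀ - V x₀ ≤ U x₁ - V x₁ := hmax hx₀
    linarith
  have hle : ∀ x ∈ C, U x - V x ≤ U x₁ - V x₁ := fun x hx => hmax hx
  refine IsSingSol.not_isMaxOn hpar hστ (K := C ∩ (fun x => U x - V x) ⁻¹' Ici (U x₁ - V x₁)) hD
    hU hV (husc.isCompact_inter_preimage_Ici hC _) (fun x hx => ?_) ⟨x₁, hx₁, le_refl (U x₁ - V x₁)⟩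
    (fun x hx => le_antisymm (hle x hx.1) hx.2) (fun x hx => ?_)
  · by_contra hxD
    have h1 := hbd x ⟨hx.1, hxD⟩
    have h2 : U x₁ - V x₁ ≤ U x - V x := hx.2
    linarith
  · exact not_le.1 fun h => hx.2 ⟨hDC hx.1, h⟩

/-- A bounded solution extends to the singularity by its lower limit. -/
lemma IsRegSol.exists_isSingSol_update [Nontrivial E] {p s σ a b : ℝ} {D : Set E} (hD : IsOpen D)
    {v : E → ℝ} (h : IsRegSol p s σ (D \ {0}) v) (ha : ∀ᶠ x in 𝓝[≠] (0 : E), a ≤ v x)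
    (hb : ∀ᶠ x in 𝓝[≠] (0 : E), v x ≤ b) :
    ∃ w : E → ℝ, EqOn w v {0}ᶜ ∧ IsSingSol p s σ D w := by
  classical
  have : (𝓝[≠] (0 : E)).NeBot := Module.punctured_nhds_neBot ℝ E 0
  have hEq : EqOn (Function.update v 0 (liminf v (𝓝[≠] 0))) v {0}ᶜ := fun x hx =>
    Function.update_of_ne hx _ _
  refine ⟨_, hEq, h.congr (hD.sdiff isClosed_singleton) (hEq.mono fun x hx => hx.2),
    fun _ η hη => ?_, fun _ η hη => ?_⟩
  · have h1 := eventually_lt_of_lt_liminf (f := 𝓝[≠] (0 : E)) (u := v)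
      (b := liminf v (𝓝[≠] 0) - η) (by linarith) (isBoundedUnder_of_eventually_ge ha)
    filter_upwards [h1, self_mem_nhdsWithin] with x hx hx0
    rwa [Function.update_self, hEq hx0]
  · have h1 := frequently_lt_of_liminf_lt (f := 𝓝[≠] (0 : E)) (u := v)
      (b := liminf v (𝓝[≠] 0) + η)
      ((isBoundedUnder_of_eventually_le hb).isCoboundedUnder_ge) (by linarith)
    refine (h1.and_eventually self_mem_nhdsWithin).mono fun x hx => ?_
    rw [Function.update_self, hEq hx.2]
    exact hx.1

variable {p s c : ℝ} {Ω : Set E} {u₁ u₂ : E → ℝ}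

lemma IsRegSol.const_mul_of_one_lt {D : Set E} (hs : 1 < s) (hc : 1 < c)
    (h : IsRegSol p s 1 D u₁) : ∃ σ < 1, IsRegSol p s σ D (fun x => c * u₁ x) := by
  have hc0 : 0 < c := by linarith
  refine ⟨_, ?_, h.const_mul hc0.ne'⟩
  rw [mul_one, abs_of_pos hc0, ← Real.rpow_one_add' hc0.le (by linarith)]
  exact Real.rpow_lt_one_of_one_lt_of_neg hc (by linarith)

/-- Comparison of two solutions when the larger one dominates near the singularity. -/
theorem IsRegSol.le_const_mul_of_eventually_le
    (hpar : IsSubcritical (Module.finrank ℝ E) p s) (hc : 1 < c)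
    (hΩ : IsOpen Ω) (hb : Bornology.IsBounded Ω)
    (h₁ : IsRegSol p s 1 (Ω \ {0}) u₁) (h₂ : IsRegSol p s 1 (Ω \ {0}) u₂)
    (hc₁ : ContinuousOn u₁ (closure Ω \ {0})) (hc₂ : ContinuousOn u₂ (closure Ω \ {0}))
    (hfr : ∀ x ∈ frontier Ω, u₂ x ≤ c * u₁ x)
    (hnear : ∀ᶠ x in 𝓝[≠] (0 : E), u₂ x ≤ c * u₁ x) : ∀ x ∈ Ω \ {0}, u₂ x ≤ c * u₁ x := by
  intro x hx
  obtain ⟨σ, hσ, hV⟩ := h₁.const_mul_of_one_lt hpar.one_lt' hc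
  rw [eventually_nhdsWithin_iff, Metric.eventually_nhds_iff_ball] at hnear
  obtain ⟨δ, hδ, hnear⟩ := hnear
  have hx0 : 0 < ‖x‖ := norm_pos_iff.2 hx.2
  set r := min (δ / 2) (‖x‖ / 2) with hr
  have hr0 : 0 < r := by positivity
  have hrδ : r < δ := (min_le_left _ _).trans_lt (by linarith)
  have hrx : r < ‖x‖ := (min_le_right _ _).trans_lt (by linarith)
  have hD0 : (0 : E) ∉ Ω \ closedBall 0 r := fun h => h.2 (by simpa using hr0.le)
  have hC0 : (0 : E) ∉ closure Ω \ ball 0 r := fun h => h.2 (by simpa using hr0)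
  have hDΩ : (Ω \ closedBall 0 r) \ {0} ⊆ Ω \ {0} := sdiff_subset_sdiff_left sdiff_subset
  have hCΩ : (closure Ω \ ball 0 r) \ {0} ⊆ closure Ω \ {0} := sdiff_subset_sdiff_left sdiff_subset
  exact IsSingSol.le_of_le_boundary hpar hσ (C := closure Ω \ ball 0 r)
    (D := Ω \ closedBall 0 r) (hb.isCompact_closure.diff isOpen_ball)
    (hΩ.sdiff isClosed_closedBall) (sdiff_subset_sdiff subset_closure ball_subset_closedBall)
    (fun h => (hC0 h).elim)
    ⟨h₂.neg.mono hDΩ, fun h => (hD0 h).elim, fun h => (hD0 h).elim⟩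
    ⟨hV.mono hDΩ, fun h => (hD0 h).elim, fun h => (hD0 h).elim⟩
    (hc₂.mono hCΩ) ((hc₁.mono hCΩ).const_mul c)
    (fun y hy => by
      by_cases hyΩ : y ∈ Ω
      · have hyr : ‖y‖ ≤ r := not_lt.1 fun h => hy.2 ⟨hyΩ, by simpa using h⟩
        exact hnear y (by simpa using hyr.trans_lt hrδ) fun h => hC0 (h ▸ hy.1)
      · exact hfr y (by rw [hΩ.frontier_eq]; exact ⟨hy.1.1, hyΩ⟩))
    x ⟨subset_closure hx.1, by simpa using hrx.le⟩

/-- Comparison of two solutions which are bounded near the singularity. -/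
theorem IsRegSol.le_const_mul_of_bounded
    (hpar : IsSubcritical (Module.finrank ℝ E) p s) (hc : 1 < c)
    (hΩ : IsOpen Ω) (hb : Bornology.IsBounded Ω) (h0 : 0 ∈ Ω)
    (h₁ : IsRegSol p s 1 (Ω \ {0}) u₁) (h₂ : IsRegSol p s 1 (Ω \ {0}) u₂)
    (hc₁ : ContinuousOn u₁ (closure Ω \ {0})) (hc₂ : ContinuousOn u₂ (closure Ω \ {0}))
    (hfr : ∀ x ∈ frontier Ω, u₂ x ≤ c * u₁ x) {a : ℝ}
    (hb₁ : ∀ᶠ x in 𝓝[≠] (0 : E), 0 ≤ u₁ x ∧ u₁ x ≤ a)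
    (hb₂ : ∀ᶠ x in 𝓝[≠] (0 : E), 0 ≤ u₂ x ∧ u₂ x ≤ a) : ∀ x ∈ Ω \ {0}, u₂ x ≤ c * u₁ x := by
  intro x hx
  have := hpar.nontrivial
  have hc0 : 0 < c := by linarith
  obtain ⟨σ, hσ, hV⟩ := h₁.const_mul_of_one_lt hpar.one_lt' hc
  obtain ⟨V, hVe, hVs⟩ := hV.exists_isSingSol_update hΩ (a := 0) (b := c * a)
    (hb₁.mono fun x hx => mul_nonneg hc0.le hx.1) (hb₁.mono fun x hx => by gcongr; exact hx.2)
  obtain ⟨U, hUe, hUs⟩ := h₂.neg.exists_isSingSol_update hΩ (a := -a) (b := 0)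
    (hb₂.mono fun x hx => neg_le_neg hx.2) (hb₂.mono fun x hx => neg_nonpos.2 hx.1)
  have hsub : closure Ω \ {0} ⊆ {0}ᶜ := fun x hx => hx.2
  have hle := IsSingSol.le_of_le_boundary hpar hσ (C := closure Ω) (U := fun x => -U x)
    hb.isCompact_closure hΩ subset_closure (fun _ => h0) (by simpa using hUs) hVs
    ((hc₂.neg.congr (hUe.mono hsub)).neg) ((hc₁.const_mul c).congr (hVe.mono hsub))
    (fun y hy => by
      have hy0 : y ∈ ({0}ᶜ : Set E) := fun h => hy.2 (mem_singleton_iff.1 h ▸ h0)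
      rw [hVe hy0, hUe hy0, neg_neg]
      exact hfr y (by rwa [hΩ.frontier_eq])) x (subset_closure hx.1)
  rwa [hVe hx.2, hUe hx.2, neg_neg] at hle

end SingularComparison

lemma nonneg_of_mem_frontier {E : Type*} [NormedAddCommGroup E] {Ω : Set E} {u : E → ℝ}
    (hΩ : IsOpen Ω) (h0 : 0 ∈ Ω)
    (hc : ContinuousOn u (closure Ω \ {0})) (hpos : ∀ x ∈ Ω \ {0}, 0 ≤ u x) {x : E}
    (hx : x ∈ frontier Ω) : 0 ≤ u x := by
  rw [hΩ.frontier_eq] at hx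
  have hx0 : x ∈ ({0}ᶜ : Set E) := fun h => hx.2 (mem_singleton_iff.1 h ▸ h0)
  have : (𝓝[Ω \ {0}] x).NeBot :=
    mem_closure_iff_nhdsWithin_neBot.1 (isOpen_compl_singleton.closure_inter ⟨hx.1, hx0⟩)
  exact ge_of_tendsto ((hc x ⟨hx.1, hx0⟩).mono (sdiff_subset_sdiff_left subset_closure))
    (eventually_nhdsWithin_of_forall hpos)

lemma eventually_le_const_mul_of_tendsto {α : Type*} {l : Filter α} {g u₁ u₂ : α → ℝ} {L c : ℝ}
    (hL : 0 < L) (hc : 1 < c) (hg : ∀ᶠ x in l, 0 < g x)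
    (h₁ : Tendsto (fun x => g x * u₁ x) l (𝓝 L)) (h₂ : Tendsto (fun x => g x * u₂ x) l (𝓝 L)) :
    ∀ᶠ x in l, u₂ x ≤ c * u₁ x := by
  filter_upwards [hg, h₂.eventually_lt (h₁.const_mul c) (lt_mul_of_one_lt_left hL hc)]
    with x hx1 hx2
  rw [mul_left_comm] at hx2
  exact (lt_of_mul_lt_mul_left hx2 hx1.le).le

/-- The subcritical range `p - 1 < q < N(p-1)/(N-1)` in terms of `s = q - p + 2`. -/
lemma isSubcritical_of_lt {n p q : ℝ} {N : ℕ} (hn : n = N) (hN : 2 ≤ N) (hp1 : 1 < p)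
    (hpN : p ≤ N) (hq1 : p - 1 < q) (hq2 : q < (N : ℝ) * (p - 1) / ((N : ℝ) - 1)) :
    IsSubcritical n p (q - p + 2) := by
  subst hn
  have hN' : (2 : ℝ) ≤ N := by exact_mod_cast hN
  have hN1 : (0 : ℝ) < N - 1 := by linarith
  have hA : (p - 1) / ((N : ℝ) - 1) ≤ 1 := by rw [div_le_one hN1]; linarith
  have hqA : q - p + 1 < (p - 1) / ((N : ℝ) - 1) := by
    have : (N : ℝ) * (p - 1) / ((N : ℝ) - 1) = (p - 1) / ((N : ℝ) - 1) + (p - 1) := by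
      field_simp
      ring
    linarith
  have hA2 : (p - 1) / ((N : ℝ) - 1) ≤ N + p - 3 := by
    rcases hN.eq_or_lt with h | h
    · rw [← h]; norm_num; linarith
    · have : (3 : ℝ) ≤ N := by exact_mod_cast h
      linarith
  refine ⟨hN', hp1, hpN, by linarith, (q - p + 1 + (p - 1) / ((N : ℝ) - 1)) / 2, ?_, ?_, ?_⟩ <;>
    linarith

lemma exists_mup_profile {N : ℕ} {p : ℝ} (hp1 : 1 < p) (hpN : p ≤ N) :
    ∃ Φ : ℝ → ℝ, (∀ t, 0 < t →
        HasDerivAt Φ (-(t ^ (-(((N : ℝ) + p - 2) / (2 * (p - 1))))) / 2) t) ∧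
      (∀ x, mup N p x = Φ (‖x‖ ^ 2)) ∧ ∀ t, 0 < t → t < 1 → 0 < Φ t := by
  have hp : 0 < p - 1 := by linarith
  by_cases h : p < N
  · have hNp : 0 < (N : ℝ) - p := by linarith
    refine ⟨fun t => ((p - 1) / ((N : ℝ) - p)) * t ^ ((p - (N : ℝ)) / (2 * (p - 1))),
      fun t ht => ?_, fun x => ?_, fun t ht _ => by positivity⟩
    · refine ((Real.hasDerivAt_rpow_const (Or.inl ht.ne')).const_mul _).congr_deriv ?_
      rw [show (p - (N : ℝ)) / (2 * (p - 1)) - 1 = -(((N : ℝ) + p - 2) / (2 * (p - 1))) by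
        field_simp; ring]
      field_simp
      ring
    · simp only
      rw [mup, if_pos h, ← Real.rpow_natCast, ← Real.rpow_mul (norm_nonneg _)]
      congr 2
      push_cast
      field_simp
  · have hNp : (N : ℝ) = p := le_antisymm (not_lt.1 h) hpN
    refine ⟨fun t => -(Real.log t) / 2, fun t ht => ?_, fun x => ?_, fun t ht ht1 => ?_⟩
    · refine ((Real.hasDerivAt_log ht.ne').neg.div_const 2).congr_deriv ?_
      rw [hNp, show (p + p - 2) / (2 * (p - 1)) = 1 by field_simp; ring, Real.rpow_neg_one]
    · simp only
      rw [mup, if_neg h, Real.log_pow]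
      push_cast
      ring
    · have := Real.log_neg ht ht1
      linarith

lemma eventually_mup_pos {N : ℕ} {p : ℝ} (hp1 : 1 < p) (hpN : p ≤ N) :
    ∀ᶠ x in 𝓝[≠] (0 : EuclideanSpace ℝ (Fin N)), 0 < mup N p x := by
  obtain ⟨Φ, -, hmu, hpos⟩ := exists_mup_profile hp1 hpN
  filter_upwards [self_mem_nhdsWithin, mem_nhdsWithin_of_mem_nhds (ball_mem_nhds _ one_pos)]
    with x hx hx1
  rw [hmu]
  have : 0 < ‖x‖ := norm_pos_iff.2 hx
  refine hpos _ (by positivity) ?_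
  have h1 : ‖x‖ < 1 := by simpa using hx1
  nlinarith

/-- A nonnegative solution that is negligible with respect to `μ_p` is bounded. -/
lemma IsRegSol.exists_le_of_tendsto_div_mup {N : ℕ} {p s : ℝ}
    (hpar : IsSubcritical (Module.finrank ℝ (EuclideanSpace ℝ (Fin N))) p s) (hp1 : 1 < p)
    (hpN : p ≤ N) {Ω : Set (EuclideanSpace ℝ (Fin N))} (hΩ : IsOpen Ω) (h0 : 0 ∈ Ω)
    {u : EuclideanSpace ℝ (Fin N) → ℝ} (hu : IsRegSol p s 1 (Ω \ {0}) u)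
    (hlim : Tendsto (fun x => u x / mup N p x) (𝓝[≠] 0) (𝓝 0)) :
    ∃ a, ∀ᶠ x in 𝓝[≠] (0 : EuclideanSpace ℝ (Fin N)), u x ≤ a := by
  have := hpar.nontrivial
  obtain ⟨Φ, hΦ, hmu, hpos⟩ := exists_mup_profile hp1 hpN
  obtain ⟨δ, hδ, hball⟩ := Metric.isOpen_iff.1 hΩ 0 h0
  set R := min (δ / 2) (1 / 2) with hR
  have hR0 : 0 < R := by positivity
  have hRδ : R < δ := (min_le_left _ _).trans_lt (by linarith)
  have hR1 : R < 1 := (min_le_right _ _).trans_lt (by norm_num)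
  have hreg : IsRegSol p s (-1) (ball 0 δ \ {0}) (fun x => -u x) :=
    hu.neg.mono (sdiff_subset_sdiff_left hball)
  have hsph : sphere (0 : EuclideanSpace ℝ (Fin N)) R ⊆ ball 0 δ \ {0} := fun z hz =>
    ⟨sphere_subset_ball hRδ hz, fun h => by
      rw [mem_singleton_iff.1 h, mem_sphere, dist_self] at hz
      linarith⟩
  obtain ⟨a, ha⟩ := (isCompact_sphere (0 : EuclideanSpace ℝ (Fin N)) R).bddBelow_image
    (hreg.continuousOn.mono hsph)
  refine ⟨max (-a) 0, ?_⟩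
  have hmain := hreg.neg_le_of_isLittleO (k := ((N : ℝ) + p - 2) / (2 * (p - 1)))
    (m := max (-a) 0) hp1.le (by linarith [hpar.one_lt'])
    (by
      have : 0 < p - 1 := by linarith
      rw [finrank_euclideanSpace_fin]
      field_simp)
    hRδ hΦ (hpos _ (by positivity) (by nlinarith)).le (le_max_right _ _)
    (fun ε hε => by
      filter_upwards [hlim.eventually_lt_const hε, eventually_mup_pos hp1 hpN] with x hx1 hx2
      rw [← hmu]
      rw [div_lt_iff₀ hx2] at hx1
      linarith)
    (fun x hx => by
      have h1 : a ≤ -u x := ha (mem_image_of_mem _ hx)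
      have h2 := le_max_left (-a) 0
      linarith)
  filter_upwards [self_mem_nhdsWithin, mem_nhdsWithin_of_mem_nhds (ball_mem_nhds _ hR0)]
    with x hx hx1
  exact neg_le_neg_iff.1 (hmain x ⟨hx1, hx⟩)

/-- One half of the uniqueness theorem, for solutions ordered up to a factor. -/
lemma IsStrongSolution.le_const_mul {N : ℕ} (hN : 2 ≤ N) {p q c : ℝ} (hp1 : 1 < p)
    (hpN : p ≤ N) (hq1 : p - 1 < q) (hq2 : q < (N : ℝ) * (p - 1) / ((N : ℝ) - 1)) (hc : 1 < c)
    {Ω : Set (EuclideanSpace ℝ (Fin N))} (hΩ : IsOpen Ω) (hb : Bornology.IsBounded Ω)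
    (h0 : (0 : EuclideanSpace ℝ (Fin N)) ∈ Ω) {u₁ u₂ : EuclideanSpace ℝ (Fin N) → ℝ}
    (hu₁ : IsStrongSolution p q (Ω \ {0}) u₁) (hu₂ : IsStrongSolution p q (Ω \ {0}) u₂)
    (hpos₁ : ∀ x ∈ Ω \ {0}, 0 ≤ u₁ x) (hpos₂ : ∀ x ∈ Ω \ {0}, 0 ≤ u₂ x)
    (hc₁ : ContinuousOn u₁ (closure Ω \ {0})) (hc₂ : ContinuousOn u₂ (closure Ω \ {0}))
    (hbd : EqOn u₁ u₂ (frontier Ω))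
    (hsing : (∃ g : EuclideanSpace ℝ (Fin N) → ℝ, ∃ L, 0 < L ∧
        (∀ᶠ x in 𝓝[≠] (0 : EuclideanSpace ℝ (Fin N)), 0 < g x) ∧
        Tendsto (fun x => g x * u₁ x) (𝓝[≠] 0) (𝓝 L) ∧
        Tendsto (fun x => g x * u₂ x) (𝓝[≠] 0) (𝓝 L)) ∨
      (Tendsto (fun x => u₁ x / mup N p x) (𝓝[≠] 0) (𝓝 0) ∧
        Tendsto (fun x => u₂ x / mup N p x) (𝓝[≠] 0) (𝓝 0))) :
    ∀ x ∈ Ω \ {0}, u₂ x ≤ c * u₁ x := by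
  have hpar : IsSubcritical (Module.finrank ℝ (EuclideanSpace ℝ (Fin N))) p (q - p + 2) :=
    isSubcritical_of_lt (by rw [finrank_euclideanSpace_fin]) hN hp1 hpN hq1 hq2
  have hO : IsOpen (Ω \ {0}) := hΩ.sdiff isClosed_singleton
  have h₁ := hu₁.isRegSol hO
  have h₂ := hu₂.isRegSol hO
  have hfr : ∀ x ∈ frontier Ω, u₂ x ≤ c * u₁ x := fun x hx => by
    rw [← hbd hx]
    exact le_mul_of_one_le_left (nonneg_of_mem_frontier hΩ h0 hc₁ hpos₁ hx) hc.le
  rcases hsing with ⟨g, L, hL, hg, hg₁, hg₂⟩ | ⟨hl₁, hl₂⟩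
  · exact h₁.le_const_mul_of_eventually_le hpar hc hΩ hb h₂ hc₁ hc₂ hfr
      (eventually_le_const_mul_of_tendsto hL hc hg hg₁ hg₂)
  · obtain ⟨a₁, ha₁⟩ := h₁.exists_le_of_tendsto_div_mup hpar hp1 hpN hΩ h0 hl₁
    obtain ⟨a₂, ha₂⟩ := h₂.exists_le_of_tendsto_div_mup hpar hp1 hpN hΩ h0 hl₂
    have hmem : ∀ᶠ x in 𝓝[≠] (0 : EuclideanSpace ℝ (Fin N)), x ∈ Ω \ {0} :=
      inter_mem (mem_nhdsWithin_of_mem_nhds (hΩ.mem_nhds h0)) self_mem_nhdsWithin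
    exact h₁.le_const_mul_of_bounded hpar hc hΩ hb h0 h₂ hc₁ hc₂ hfr (a := max a₁ a₂)
      ((hmem.and ha₁).mono fun x hx => ⟨hpos₁ x hx.1, hx.2.trans (le_max_left _ _)⟩)
      ((hmem.and ha₂).mono fun x hx => ⟨hpos₂ x hx.1, hx.2.trans (le_max_right _ _)⟩)

lemma le_of_forall_le_const_mul {a b : ℝ} (h : ∀ c > 1, b ≤ c * a) : b ≤ a := by
  have hlim : Tendsto (fun c : ℝ => c * a) (𝓝[>] 1) (𝓝 a) := by
    have h1 : Continuous fun c : ℝ => c * a := by fun_prop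
    simpa using (h1.tendsto 1).mono_left nhdsWithin_le_nhds
  exact ge_of_tendsto hlim (eventually_mem_nhdsWithin.mono fun c hc => h c hc)

/-- Uniqueness: a nonnegative solution is determined by its boundary data and its
behaviour at the isolated singularity. -/
theorem uniqueness_singular_solutions (N : ℕ) (hN : 2 ≤ N) (p q : ℝ) (hp1 : 1 < p)
    (hpN : p ≤ N) (hq1 : p - 1 < q) (hq2 : q < (N : ℝ) * (p - 1) / ((N : ℝ) - 1))
    (Ω : Set (EuclideanSpace ℝ (Fin N))) (hΩ : IsOpen Ω) (hb : Bornology.IsBounded Ω)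
    (h0 : (0 : EuclideanSpace ℝ (Fin N)) ∈ Ω)
    (u₁ u₂ : EuclideanSpace ℝ (Fin N) → ℝ)
    (hu₁ : IsStrongSolution p q (Ω \ {0}) u₁) (hu₂ : IsStrongSolution p q (Ω \ {0}) u₂)
    (hpos₁ : ∀ x ∈ Ω \ {0}, 0 ≤ u₁ x) (hpos₂ : ∀ x ∈ Ω \ {0}, 0 ≤ u₂ x)
    (hc₁ : ContinuousOn u₁ (closure Ω \ {0})) (hc₂ : ContinuousOn u₂ (closure Ω \ {0}))
    (hbd : Set.EqOn u₁ u₂ (frontier Ω))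
    (hsing :
      (∃ k : ℝ, 0 ≤ k ∧
        Filter.Tendsto (fun x => u₁ x / mup N p x) (𝓝[≠] (0 : EuclideanSpace ℝ (Fin N)))
          (nhds k) ∧
        Filter.Tendsto (fun x => u₂ x / mup N p x) (𝓝[≠] (0 : EuclideanSpace ℝ (Fin N)))
          (nhds k)) ∨
      (Filter.Tendsto (fun x => ‖x‖ ^ ((p - q) / (q + 1 - p)) * u₁ x)
          (𝓝[≠] (0 : EuclideanSpace ℝ (Fin N)))
          (nhds (((p - q) / (q + 1 - p))⁻¹
            * (((N : ℝ) * (p - 1) - ((N : ℝ) - 1) * q) / (q + 1 - p)) ^ (1 / (q + 1 - p)))) ∧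
        Filter.Tendsto (fun x => ‖x‖ ^ ((p - q) / (q + 1 - p)) * u₂ x)
          (𝓝[≠] (0 : EuclideanSpace ℝ (Fin N)))
          (nhds (((p - q) / (q + 1 - p))⁻¹
            * (((N : ℝ) * (p - 1) - ((N : ℝ) - 1) * q) / (q + 1 - p)) ^ (1 / (q + 1 - p)))))) :
    Set.EqOn u₁ u₂ (Ω \ {0}) := by
  have hsing' : (∃ g : EuclideanSpace ℝ (Fin N) → ℝ, ∃ L, 0 < L ∧
        (∀ᶠ x in 𝓝[≠] (0 : EuclideanSpace ℝ (Fin N)), 0 < g x) ∧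
        Tendsto (fun x => g x * u₁ x) (𝓝[≠] 0) (𝓝 L) ∧
        Tendsto (fun x => g x * u₂ x) (𝓝[≠] 0) (𝓝 L)) ∨
      (Tendsto (fun x => u₁ x / mup N p x) (𝓝[≠] 0) (𝓝 0) ∧
        Tendsto (fun x => u₂ x / mup N p x) (𝓝[≠] 0) (𝓝 0)) := by
    rcases hsing with ⟨k, hk, hk₁, hk₂⟩ | ⟨hl₁, hl₂⟩
    · rcases hk.eq_or_lt with rfl | hk
      · exact Or.inr ⟨hk₁, hk₂⟩
      · simp only [div_eq_inv_mul] at hk₁ hk₂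
        exact Or.inl ⟨fun x => (mup N p x)⁻¹, k, hk,
          (eventually_mup_pos hp1 hpN).mono fun x hx => inv_pos.2 hx, hk₁, hk₂⟩
    · refine Or.inl ⟨_, _, ?_, ?_, hl₁, hl₂⟩
      · have hN1 : (0 : ℝ) < N - 1 := by
          have : (2 : ℝ) ≤ N := by exact_mod_cast hN
          linarith
        rw [lt_div_iff₀ hN1] at hq2
        have hpq : 0 < p - q := by nlinarith
        have hq : 0 < q + 1 - p := by linarith
        have hb' : 0 < (N : ℝ) * (p - 1) - ((N : ℝ) - 1) * q := by linarith
        positivity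
      · filter_upwards [self_mem_nhdsWithin] with x hx
        exact Real.rpow_pos_of_pos (norm_pos_iff.2 hx) _
  intro x hx
  refine le_antisymm (le_of_forall_le_const_mul fun c hc => ?_)
    (le_of_forall_le_const_mul fun c hc => ?_)
  · refine IsStrongSolution.le_const_mul hN hp1 hpN hq1 hq2 hc hΩ hb h0 hu₂ hu₁ hpos₂ hpos₁
      hc₂ hc₁ hbd.symm ?_ x hx
    exact hsing'.imp (fun ⟨g, L, hL, hg, hg₁, hg₂⟩ => ⟨g, L, hL, hg, hg₂, hg₁⟩) And.symm
  · exact IsStrongSolution.le_const_mul hN hp1 hpN hq1 hq2 hc hΩ hb h0 hu₁ hu₂ hpos₁ hpos₂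
      hc₁ hc₂ hbd hsing' x hx
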